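/- Let n ≥ 2, 0 < α < n, 1 < s ≤ ∞ and 0 < β ≤ 1, and suppose Ω satisfies the L^{s;β}-Dini condition D_{s;β}. Then there is a constant C > 0 such that for every ball B = B(x₀, r), every integer j ≥ 2, and every x ∈ B, (∫_{2^{j+1}B ∖ 2^{j}B} | Ω(x−z)/|x−z|^{n−α} − Ω(x₀−z)/|x₀−z|^{n−α} |^s dz)^{1/s} ≤ C (2^{j}r)^{n/s − (n−α)} [ 2^{−j} + 2^{−jβ} ∫_{|x−x₀|/(2^{j+1}r)}^{|x−x₀|/(2^{j}r)} ω_s(δ)/δ^{1+β} dδ ] (for s = ∞ the left-hand side is the essential supremum over 2^{j+1}B ∖ 2^{j}B and n/s = 0). -/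

import Mathlib

noncomputable section

open MeasureTheory Metric Set
open scoped ENNReal

abbrev En (n : ℕ) : Type := EuclideanSpace ℝ (Fin n)

/-- `Ω` is homogeneous of degree zero. -/
def HomZero {n : ℕ} (Ω : En n → ℝ) : Prop :=
  ∀ t : ℝ, 0 < t → ∀ x : En n, x ≠ 0 → Ω (t • x) = Ω x

/-- Surface measure on the unit sphere `S^{n-1}`. -/
noncomputable def sphereMeasure (n : ℕ) : Measure (sphere (0 : En n) 1) :=
  (volume : Measure (En n)).toSphere

/-- The `L^s(S^{n-1})` norm of `Ω` (essential supremum when `s = ∞`). -/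
noncomputable def sphereLpNorm {n : ℕ} (s : ℝ≥0∞) (Ω : En n → ℝ) : ℝ≥0∞ :=
  eLpNorm (fun x : sphere (0 : En n) 1 => Ω (x : En n)) s (sphereMeasure n)

/-- `‖ρ - I‖ = sup_{x' ∈ S^{n-1}} |ρ x' - x'|`. -/
noncomputable def rotNorm {n : ℕ} (ρ : En n ≃ₗᵢ[ℝ] En n) : ℝ :=
  ⨆ x : sphere (0 : En n) 1, ‖ρ (x : En n) - (x : En n)‖

/-- `ρ ∈ SO(n)`: a linear isometry with determinant one. -/
def IsRotation {n : ℕ} (ρ : En n ≃ₗᵢ[ℝ] En n) : Prop :=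
  LinearMap.det (ρ.toLinearEquiv : En n →ₗ[ℝ] En n) = 1

/-- The integral modulus of continuity `ω_s(δ)` of `Ω` of order `s`
(essential-sup version when `s = ∞`). -/
noncomputable def modCont {n : ℕ} (s : ℝ≥0∞) (Ω : En n → ℝ) (δ : ℝ) : ℝ :=
  (⨆ ρ : {ρ : En n ≃ₗᵢ[ℝ] En n // IsRotation ρ ∧ rotNorm ρ < δ},
    eLpNorm (fun x : sphere (0 : En n) 1 => Ω (ρ.1 (x : En n)) - Ω (x : En n)) s
      (sphereMeasure n)).toReal

/-- The `L^{s;β}`-Dini smoothness condition `D_{s;β}`. -/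
def DiniCond {n : ℕ} (s : ℝ≥0∞) (β : ℝ) (Ω : En n → ℝ) : Prop :=
  HomZero Ω ∧ sphereLpNorm s Ω ≠ ⊤ ∧
    IntegrableOn (fun δ : ℝ => modCont s Ω δ / δ ^ (1 + β)) (Ioo (0 : ℝ) 1)

/-- The homogeneous fractional integral operator `T_{Ω,α}`. -/
noncomputable def T {n : ℕ} (Ω : En n → ℝ) (α : ℝ) (f : En n → ℝ) (x : En n) : ℝ :=
  ∫ y, Ω (x - y) * ‖x - y‖ ^ (α - (n : ℝ)) * f y

/-- Conjugate exponent of `s ∈ (1,∞]`, with `∞' = 1`. -/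
noncomputable def conj (s : ℝ≥0∞) : ℝ := if s = ⊤ then 1 else s.toReal / (s.toReal - 1)

/-- Conjugate exponent of a real exponent `t`. -/
noncomputable def rconj (t : ℝ) : ℝ := t / (t - 1)

/-- A weight: a locally integrable a.e. positive function. -/
def IsWeight {n : ℕ} (ω : En n → ℝ) : Prop :=
  LocallyIntegrable ω volume ∧ ∀ᵐ x : En n, 0 < ω x

/-- The Muckenhoupt–Wheeden class `A(t, ∞)`. -/
def MemArInfty {n : ℕ} (ω : En n → ℝ) (t : ℝ) : Prop :=
  ∃ C > 0, ∀ (x₀ : En n) (r : ℝ), 0 < r →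
    essSup ω (volume.restrict (ball x₀ r)) *
      (⨍ x in ball x₀ r, ω x ^ (-(rconj t))) ^ (1 / rconj t) ≤ C

/-- The Muckenhoupt–Wheeden class `A(u, t)` (with the `ess sup` convention when `u = 1`). -/
def MemArt {n : ℕ} (ω : En n → ℝ) (u t : ℝ) : Prop :=
  ∃ C > 0, ∀ (x₀ : En n) (r : ℝ), 0 < r →
    (⨍ x in ball x₀ r, ω x ^ t) ^ (1 / t) *
      (if u = 1 then essSup (fun x => (ω x)⁻¹) (volume.restrict (ball x₀ r))
       else (⨍ x in ball x₀ r, ω x ^ (-(rconj u))) ^ (1 / rconj u)) ≤ C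

/-- The weighted Lebesgue norm `‖f‖_{L^p(ω^p)}`. -/
noncomputable def wLpNorm {n : ℕ} (p : ℝ) (ω f : En n → ℝ) : ℝ :=
  (∫ x, |f x| ^ p * ω x ^ p) ^ (1 / p)

/-- `f ∈ L^p(ω^p)`. -/
def MemWLp {n : ℕ} (p : ℝ) (ω f : En n → ℝ) : Prop :=
  Measurable f ∧ Integrable (fun x => |f x| ^ p * ω x ^ p)

/-- The set of ball quantities defining the weighted Morrey norm `M^{p,κ}(ω₁, ν)`. -/
def morreySet {n : ℕ} (p κ : ℝ) (ω₁ ν f : En n → ℝ) : Set ℝ :=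
  {c | ∃ (x₀ : En n) (r : ℝ), 0 < r ∧
    c = ((∫ x in ball x₀ r, ν x) ^ (-κ) * ∫ x in ball x₀ r, |f x| ^ p * ω₁ x) ^ (1 / p)}

/-- The weighted Morrey norm `‖f‖_{M^{p,κ}(ω₁, ν)}`. -/
noncomputable def morreyNorm {n : ℕ} (p κ : ℝ) (ω₁ ν f : En n → ℝ) : ℝ :=
  sSup (morreySet p κ ω₁ ν f)

/-- `f ∈ M^{p,κ}(ω₁, ν)`, i.e. `‖f‖_{M^{p,κ}(ω₁,ν)} < ∞`. -/
def MemMorrey {n : ℕ} (p κ : ℝ) (ω₁ ν f : En n → ℝ) : Prop :=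
  Measurable f ∧
  (∀ (x₀ : En n) (r : ℝ), 0 < r → IntegrableOn (fun x => |f x| ^ p * ω₁ x) (ball x₀ r)) ∧
  BddAbove (morreySet p κ ω₁ ν f)

/-!
After rescaling by `R = 2 ^ j * r`, the annulus becomes `1 ≤ |u| < 2` and the two kernels differ by
a translation by `η = (x - x₀) / R`, with `|η| ≤ 2 ^ (-j)`. In the difference, the variation of the
radial factor `|u| ^ (α - n)` is `O(|η|)`, so the point is to bound `Ω (u + η) - Ω u` in `L^s` by
the modulus `ω_s`, which only controls rotations.

A point `y` close to `u` can be written `y = |v|² S_v S_e u`, where `S_v` is the reflection in the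
hyperplane orthogonal to `v`, the fixed unit vector `e` has `⟪e, u⟫` bounded below, and `v` is close
to `e`. By homogeneity `Ω y = Ω (S_v S_e u)`, and `S_v S_e` is a rotation at distance `O(|v - e|)`
from the identity. As `v ↦ |v|² S_v S_e u` is Lipschitz, changing variables from `y` to `v` bounds
`Ω y - Ω u` in `L^s` of the pairs with `|y - u| < ε` by `ω_s (O(ε))`, times the `s`-th root of
`O(ε ^ n)`. Writing `Ω (u + κ) - Ω u` as `(Ω y - Ω u) - (Ω y - Ω (u + κ))` and averaging over the
points `y` near both `u` and `u + κ`, with `ε = |κ|`, cancels this root, and finitely many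
directions `e` suffice to cover the annulus. Replacing `η` by `N` equal steps `κ = η / N` then gives
`ω_s (|η| / 2)`, and the integral in the statement dominates that value because `ω_s` is monotone.
-/

open scoped NNReal RealInnerProductSpace

section Reflection

variable {E : Type*} [NormedAddCommGroup E] [InnerProductSpace ℝ E]

/-- `‖v‖²` times the reflection in the hyperplane orthogonal to `v`. Unlike the reflection itself it
is polynomial in `v`, hence Lipschitz on bounded sets, the origin included. -/
def scaledReflection (v w : E) : E := ‖v‖ ^ 2 • w - (2 * ⟪v, w⟫) • v

lemma continuous_scaledReflection : Continuous fun p : E × E ↦ scaledReflection p.1 p.2 := by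
  unfold scaledReflection
  fun_prop

lemma scaledReflection_eq_smul_reflection (v w : E) :
    scaledReflection v w = ‖v‖ ^ 2 • (ℝ ∙ v)ᗮ.reflection w := by
  rcases eq_or_ne v 0 with rfl | hv
  · simp [scaledReflection]
  have : ‖v‖ ≠ 0 := norm_ne_zero_iff.2 hv
  rw [scaledReflection, Submodule.reflection_orthogonal_apply,
    Submodule.reflection_singleton_apply, neg_sub, smul_sub, ← Nat.cast_smul_eq_nsmul ℝ,
    smul_smul, smul_smul]
  congr 2
  simp only [RCLike.ofReal_real_eq_id, id, Nat.cast_ofNat]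
  field_simp

lemma reflection_eq_scaledReflection {e : E} (he : ‖e‖ = 1) (w : E) :
    (ℝ ∙ e)ᗮ.reflection w = scaledReflection e w := by
  rw [scaledReflection_eq_smul_reflection, he, one_pow, one_smul]

lemma scaledReflection_smul_left (t : ℝ) (v w : E) :
    scaledReflection (t • v) w = t ^ 2 • scaledReflection v w := by
  simp only [scaledReflection, norm_smul, real_inner_smul_left, smul_sub, smul_smul, mul_pow,
    Real.norm_eq_abs, sq_abs]
  ring_nf

lemma scaledReflection_sub_left_of_norm_eq {a w : E} (h : ‖a‖ = ‖w‖) :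
    scaledReflection (a - w) w = ‖a - w‖ ^ 2 • a := by
  have hinner : 2 * ⟪a - w, w⟫ = -‖a - w‖ ^ 2 := by
    rw [inner_sub_left, real_inner_self_eq_norm_sq, norm_sub_sq_real, h]
    ring
  rw [scaledReflection, hinner]
  module

lemma norm_scaledReflection_sub_le (v v' w : E) :
    ‖scaledReflection v w - scaledReflection v' w‖ ≤ 3 * (‖v‖ + ‖v'‖) * ‖w‖ * ‖v - v'‖ := by
  have hsplit : scaledReflection v w - scaledReflection v' w =
      ((‖v‖ + ‖v'‖) * (‖v‖ - ‖v'‖)) • w - (2 * ⟪v - v', w⟫) • v - (2 * ⟪v', w⟫) • (v - v') := by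
    simp only [scaledReflection, inner_sub_left]
    module
  have hnorm : |‖v‖ - ‖v'‖| ≤ ‖v - v'‖ := abs_norm_sub_norm_le v v'
  have hinner : |⟪v - v', w⟫| ≤ ‖v - v'‖ * ‖w‖ := abs_real_inner_le_norm _ _
  have hinner' : |⟪v', w⟫| ≤ ‖v'‖ * ‖w‖ := abs_real_inner_le_norm _ _
  calc ‖scaledReflection v w - scaledReflection v' w‖
      ≤ (‖v‖ + ‖v'‖) * |‖v‖ - ‖v'‖| * ‖w‖ + 2 * |⟪v - v', w⟫| * ‖v‖
        + 2 * |⟪v', w⟫| * ‖v - v'‖ := by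
        rw [hsplit]
        refine (norm_sub_le _ _).trans (add_le_add ((norm_sub_le _ _).trans_eq ?_) (le_of_eq ?_))
        · simp only [norm_smul, norm_mul, Real.norm_eq_abs, abs_two,
            abs_of_nonneg (add_nonneg (norm_nonneg v) (norm_nonneg v'))]
        · simp only [norm_smul, norm_mul, Real.norm_eq_abs, abs_two]
    _ ≤ (‖v‖ + ‖v'‖) * ‖v - v'‖ * ‖w‖ + 2 * (‖v - v'‖ * ‖w‖) * ‖v‖
        + 2 * (‖v'‖ * ‖w‖) * ‖v - v'‖ := by gcongr
    _ = 3 * (‖v‖ + ‖v'‖) * ‖w‖ * ‖v - v'‖ := by ring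

lemma norm_inv_norm_smul_sub_inv_norm_smul_le {a b : E} (ha : a ≠ 0) (hb : b ≠ 0) :
    ‖‖a‖⁻¹ • a - ‖b‖⁻¹ • b‖ ≤ 2 * ‖a - b‖ / ‖b‖ := by
  have hsplit : ‖a‖⁻¹ • a - ‖b‖⁻¹ • b =
      ‖b‖⁻¹ • ((‖b‖ - ‖a‖) • (‖a‖⁻¹ • a) + (a - b)) := by
    have : ‖a‖ ≠ 0 := norm_ne_zero_iff.2 ha
    have : ‖b‖ ≠ 0 := norm_ne_zero_iff.2 hb
    match_scalars <;> field_simp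
    ring
  have hnorm : |‖b‖ - ‖a‖| ≤ ‖a - b‖ := by
    rw [norm_sub_rev]
    exact abs_norm_sub_norm_le b a
  have hunit : ‖‖a‖⁻¹ • a‖ = 1 := norm_smul_inv_norm (𝕜 := ℝ) ha
  rw [hsplit, norm_smul, norm_inv, norm_norm, inv_mul_eq_div]
  gcongr
  refine (norm_add_le _ _).trans ?_
  rw [norm_smul, hunit, mul_one, Real.norm_eq_abs]
  linarith

lemma norm_reflection_sub_reflection_le {e v : E} (he : ‖e‖ = 1) (hv : v ≠ 0) (w : E) :
    ‖(ℝ ∙ e)ᗮ.reflection w - (ℝ ∙ v)ᗮ.reflection w‖ ≤ 12 * ‖v - e‖ * ‖w‖ := by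
  have hv' : ‖‖v‖⁻¹ • v‖ = 1 := norm_smul_inv_norm (𝕜 := ℝ) hv
  have hspan : (ℝ ∙ v) = (ℝ ∙ ‖v‖⁻¹ • v) :=
    (Submodule.span_singleton_smul_eq (IsUnit.mk0 _ (inv_ne_zero (norm_ne_zero_iff.2 hv))) v).symm
  have hdir : ‖e - ‖v‖⁻¹ • v‖ ≤ 2 * ‖v - e‖ := by
    have := norm_inv_norm_smul_sub_inv_norm_smul_le hv
      (norm_ne_zero_iff.1 (he ▸ one_ne_zero) : e ≠ 0)
    rwa [he, inv_one, one_smul, div_one, norm_sub_rev] at this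
  calc ‖(ℝ ∙ e)ᗮ.reflection w - (ℝ ∙ v)ᗮ.reflection w‖
      = ‖scaledReflection e w - scaledReflection (‖v‖⁻¹ • v) w‖ := by
        simp only [hspan, reflection_eq_scaledReflection he, reflection_eq_scaledReflection hv']
    _ ≤ 3 * (‖e‖ + ‖‖v‖⁻¹ • v‖) * ‖w‖ * ‖e - ‖v‖⁻¹ • v‖ := norm_scaledReflection_sub_le _ _ _
    _ ≤ 3 * (1 + 1) * ‖w‖ * (2 * ‖v - e‖) := by rw [he, hv']; gcongr
    _ = 12 * ‖v - e‖ * ‖w‖ := by ring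

lemma norm_norm_div_norm_smul_sub_le {y : E} (hy : y ≠ 0) (u : E) :
    ‖(‖u‖ / ‖y‖) • y - u‖ ≤ 2 * ‖y - u‖ := by
  have hrescale : ‖(‖u‖ / ‖y‖) • y - y‖ = |‖y‖ - ‖u‖| := by
    have : (‖u‖ / ‖y‖) • y - y = (‖u‖ - ‖y‖) • (‖y‖⁻¹ • y) := by
      have : ‖y‖ ≠ 0 := norm_ne_zero_iff.2 hy
      match_scalars
      field_simp
    have hunit : ‖‖y‖⁻¹ • y‖ = 1 := norm_smul_inv_norm (𝕜 := ℝ) hy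
    rw [this, norm_smul, hunit, mul_one, Real.norm_eq_abs, abs_sub_comm]
  have htri := norm_sub_le_norm_sub_add_norm_sub ((‖u‖ / ‖y‖) • y) y u
  linarith [abs_norm_sub_norm_le y u]

lemma abs_sqrt_sub_one_le {x : ℝ} (hx : 0 ≤ x) : |√x - 1| ≤ |x - 1| := by
  have hfactor : x - 1 = (√x - 1) * (√x + 1) := by
    nlinarith [Real.sq_sqrt hx]
  rw [hfactor, abs_mul]
  refine le_mul_of_one_le_right (abs_nonneg _) ?_
  rw [abs_of_nonneg (by positivity)]
  linarith [Real.sqrt_nonneg x]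

lemma sub_reflection_eq_smul {e : E} (he : ‖e‖ = 1) (u : E) :
    u - (ℝ ∙ e)ᗮ.reflection u = (2 * ⟪e, u⟫) • e := by
  rw [reflection_eq_scaledReflection he, scaledReflection, he]
  module

/-- The vector `v` is a multiple of the difference between `w` and the multiple of `y` of norm
`‖w‖`: the reflection attached to it maps `w` to that multiple of `y`. -/
lemma scaledReflection_sqrt_smul_eq {y w : E} (hy : y ≠ 0) (hw : w ≠ 0)
    (h : (‖w‖ / ‖y‖) • y ≠ w) :
    scaledReflection (√(‖y‖ / ‖w‖) • (‖(‖w‖ / ‖y‖) • y - w‖⁻¹ • ((‖w‖ / ‖y‖) • y - w))) w = y := by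
  have hq : ‖(‖w‖ / ‖y‖) • y - w‖ ≠ 0 := norm_ne_zero_iff.2 (sub_ne_zero.2 h)
  have hy' : ‖y‖ ≠ 0 := norm_ne_zero_iff.2 hy
  have hw' : ‖w‖ ≠ 0 := norm_ne_zero_iff.2 hw
  have hnorm : ‖(‖w‖ / ‖y‖) • y‖ = ‖w‖ := by
    rw [norm_smul, norm_div, norm_norm, norm_norm, div_mul_cancel₀ _ hy']
  rw [scaledReflection_smul_left, scaledReflection_smul_left,
    scaledReflection_sub_left_of_norm_eq hnorm, Real.sq_sqrt (by positivity), smul_smul, smul_smul,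
    smul_smul, inv_pow, inv_mul_cancel_right₀ (pow_ne_zero 2 hq)]
  field_simp
  rw [one_smul]

lemma norm_inv_norm_smul_sub_le {e q : E} (he : ‖e‖ = 1) (hq : q ≠ 0) {t : ℝ} (ht : 0 < t) :
    ‖‖q‖⁻¹ • q - e‖ ≤ 2 * ‖q - t • e‖ / t := by
  have hnorm : ‖t • e‖ = t := by rw [norm_smul, he, mul_one, Real.norm_of_nonneg ht.le]
  have := norm_inv_norm_smul_sub_inv_norm_smul_le hq (norm_pos_iff.1 (ht.trans_eq hnorm.symm))
  rwa [hnorm, inv_smul_smul₀ ht.ne'] at this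

lemma norm_smul_sub_le_abs_sub_one_add {a : E} (ha : ‖a‖ = 1) (t : ℝ) (e : E) :
    ‖t • a - e‖ ≤ |t - 1| + ‖a - e‖ :=
  calc ‖t • a - e‖ = ‖(t - 1) • a + (a - e)‖ := by congr 1; module
    _ ≤ |t - 1| + ‖a - e‖ := by
      refine (norm_add_le _ _).trans_eq ?_
      rw [norm_smul, ha, mul_one, Real.norm_eq_abs]

lemma exists_scaledReflection_reflection_eq {e u y : E} (he : ‖e‖ = 1) (hy : ‖y - u‖ < ⟪e, u⟫) :
    ∃ v : E, ‖v - e‖ ≤ 3 * ‖y - u‖ / ⟪e, u⟫ ∧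
      scaledReflection v ((ℝ ∙ e)ᗮ.reflection u) = y := by
  set d := ‖y - u‖
  set m := ⟪e, u⟫
  have hd : 0 ≤ d := norm_nonneg _
  have hm : 0 < m := hd.trans_lt hy
  have hmu : m ≤ ‖u‖ := by simpa [he] using real_inner_le_norm e u
  have hu : 0 < ‖u‖ := hm.trans_le hmu
  have hdu : |‖y‖ - ‖u‖| ≤ d := abs_norm_sub_norm_le y u
  have hy0 : 0 < ‖y‖ := by linarith [neg_abs_le (‖y‖ - ‖u‖)]
  set w := (ℝ ∙ e)ᗮ.reflection u
  have hw : ‖w‖ = ‖u‖ := LinearIsometryEquiv.norm_map _ _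
  set q := (‖u‖ / ‖y‖) • y - w with hq
  have hdist : ‖q - (2 * m) • e‖ ≤ 2 * d := by
    rw [hq, ← sub_reflection_eq_smul he, sub_sub_sub_cancel_right]
    exact norm_norm_div_norm_smul_sub_le (norm_pos_iff.1 hy0) u
  have hq0 : q ≠ 0 := by
    intro h
    rw [h, zero_sub, norm_neg, norm_smul, he, mul_one, Real.norm_of_nonneg (by positivity)] at hdist
    linarith
  refine ⟨√(‖y‖ / ‖u‖) • (‖q‖⁻¹ • q), ?_, ?_⟩
  · have hdir : ‖‖q‖⁻¹ • q - e‖ ≤ 2 * (d / m) :=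
      calc ‖‖q‖⁻¹ • q - e‖ ≤ 2 * ‖q - (2 * m) • e‖ / (2 * m) :=
            norm_inv_norm_smul_sub_le he hq0 (by positivity)
        _ ≤ 2 * (2 * d) / (2 * m) := by gcongr
        _ = 2 * (d / m) := by field_simp
    have hscale : |√(‖y‖ / ‖u‖) - 1| ≤ d / m :=
      calc |√(‖y‖ / ‖u‖) - 1| ≤ |‖y‖ / ‖u‖ - 1| := abs_sqrt_sub_one_le (by positivity)
        _ = |‖y‖ - ‖u‖| / ‖u‖ := by rw [div_sub_one hu.ne', abs_div, abs_norm]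
        _ ≤ d / m := by gcongr
    have hunit : ‖‖q‖⁻¹ • q‖ = 1 := norm_smul_inv_norm (𝕜 := ℝ) hq0
    rw [mul_div_assoc]
    linarith [norm_smul_sub_le_abs_sub_one_add hunit √(‖y‖ / ‖u‖) e]
  · rw [hq, ← hw]
    refine scaledReflection_sqrt_smul_eq (norm_pos_iff.1 hy0) (norm_pos_iff.1 (hw ▸ hu)) ?_
    rw [hw]
    exact sub_ne_zero.1 hq0

end Reflection

section Rotation

variable {n : ℕ}

/-- The product of the reflections in the hyperplanes orthogonal to `e` and to `v`, a rotation
close to the identity when `v` is close to `e`. -/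
def reflectionRotation (e v : En n) : En n ≃ₗᵢ[ℝ] En n :=
  (ℝ ∙ e)ᗮ.reflection.trans (ℝ ∙ v)ᗮ.reflection

lemma det_reflection_orthogonal_span_singleton {v : En n} (hv : v ≠ 0) :
    LinearMap.det ((ℝ ∙ v)ᗮ.reflection.toLinearEquiv : En n →ₗ[ℝ] En n) = -1 := by
  have := Submodule.det_reflection (𝕜 := ℝ) (ℝ ∙ v)ᗮ
  rwa [Submodule.orthogonal_orthogonal, finrank_span_singleton hv, pow_one] at this

lemma isRotation_reflectionRotation {e v : En n} (he : e ≠ 0) (hv : v ≠ 0) :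
    IsRotation (reflectionRotation e v) := by
  change LinearMap.det (((ℝ ∙ v)ᗮ.reflection.toLinearEquiv : En n →ₗ[ℝ] En n) ∘ₗ
    ((ℝ ∙ e)ᗮ.reflection.toLinearEquiv : En n →ₗ[ℝ] En n)) = 1
  rw [LinearMap.det_comp, det_reflection_orthogonal_span_singleton hv,
    det_reflection_orthogonal_span_singleton he]
  norm_num

lemma rotNorm_reflectionRotation_le {e v : En n} (he : ‖e‖ = 1) (hv : v ≠ 0) :
    rotNorm (reflectionRotation e v) ≤ 12 * ‖v - e‖ := by
  refine Real.iSup_le (fun x ↦ ?_) (by positivity)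
  have hx : ‖(x : En n)‖ = 1 := norm_eq_of_mem_sphere x
  calc ‖reflectionRotation e v x - x‖
      = ‖(ℝ ∙ v)ᗮ.reflection ((ℝ ∙ e)ᗮ.reflection x - (ℝ ∙ v)ᗮ.reflection x)‖ := by
        rw [map_sub, Submodule.reflection_reflection]
        rfl
    _ = ‖(ℝ ∙ e)ᗮ.reflection (x : En n) - (ℝ ∙ v)ᗮ.reflection x‖ :=
        LinearIsometryEquiv.norm_map _ _
    _ ≤ 12 * ‖v - e‖ := by
        simpa only [hx, mul_one] using norm_reflection_sub_reflection_le he hv (x : En n)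

lemma scaledReflection_reflection_eq_smul_reflectionRotation (e v u : En n) :
    scaledReflection v ((ℝ ∙ e)ᗮ.reflection u) = ‖v‖ ^ 2 • reflectionRotation e v u :=
  scaledReflection_eq_smul_reflection v _

end Rotation

section Measure

variable {α β F : Type*} [MeasurableSpace α] [MeasurableSpace β] {μ : Measure α} {ν : Measure β}
  {p : ℝ≥0∞}

lemma eLpNorm_prod_le_of_forall_slice [SFinite ν] [SFinite μ] [NormedAddCommGroup F]
    {f : α × β → F} (hf : StronglyMeasurable f) {M : ℝ≥0∞}
    (hM : ∀ᵐ x ∂μ, eLpNorm (fun y ↦ f (x, y)) p ν ≤ M) :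
    eLpNorm f p (μ.prod ν) ≤ μ univ ^ (1 / p).toReal * M := by
  rcases eq_or_ne p 0 with rfl | hp0
  · simp
  rcases eq_or_ne p ⊤ with rfl | hp
  · have hfM : ∀ᵐ z ∂μ.prod ν, ‖f z‖ₑ ≤ M := by
      rw [Measure.ae_prod_iff_ae_ae (measurableSet_le hf.enorm measurable_const)]
      filter_upwards [hM] with x hx
      filter_upwards [ae_le_eLpNormEssSup (f := fun y ↦ f (x, y)) (μ := ν)] with y hy
      exact hy.trans hx
    simpa using eLpNormEssSup_le_of_ae_enorm_bound hfM
  have hp' : 0 < p.toReal := ENNReal.toReal_pos hp0 hp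
  have hslice : ∀ᵐ x ∂μ, ∫⁻ y, ‖f (x, y)‖ₑ ^ p.toReal ∂ν ≤ M ^ p.toReal := by
    filter_upwards [hM] with x hx
    rwa [eLpNorm_eq_lintegral_rpow_enorm_toReal hp0 hp, one_div, ENNReal.rpow_inv_le_iff hp'] at hx
  rw [eLpNorm_eq_lintegral_rpow_enorm_toReal hp0 hp, one_div, one_div, ENNReal.toReal_inv,
    ENNReal.rpow_inv_le_iff hp', ENNReal.mul_rpow_of_nonneg _ _ hp'.le, ← ENNReal.rpow_mul,
    inv_mul_cancel₀ hp'.ne', ENNReal.rpow_one,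
    lintegral_prod _ (hf.enorm.pow_const _).aemeasurable]
  calc ∫⁻ x, ∫⁻ y, ‖f (x, y)‖ₑ ^ p.toReal ∂ν ∂μ ≤ ∫⁻ _, M ^ p.toReal ∂μ := lintegral_mono_ae hslice
    _ = μ univ * M ^ p.toReal := by rw [lintegral_const, mul_comm]

lemma eLpNorm_comp_fst_prod [SFinite ν] [NormedAddCommGroup F] {f : α → F}
    (hf : AEStronglyMeasurable f μ) (hν : ν univ ≠ 0) :
    eLpNorm (fun z : α × β ↦ f z.1) p (μ.prod ν) = ν univ ^ (1 / p).toReal * eLpNorm f p μ := by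
  have hmap : Measure.map Prod.fst (μ.prod ν) = ν univ • μ := Measure.map_fst_prod
  calc eLpNorm (f ∘ Prod.fst) p (μ.prod ν) = eLpNorm f p (ν univ • μ) := by
        rw [← hmap, eLpNorm_map_measure (by rw [hmap]; exact hf.smul_measure _)
          measurable_fst.aemeasurable]
    _ = ν univ ^ (1 / p).toReal * eLpNorm f p μ := by
        rw [eLpNorm_smul_measure_of_ne_zero hν, smul_eq_mul]

lemma eLpNorm_comp_restrict_le_of_mapsTo [NormedAddCommGroup F] {f : β → F} {Ψ : α → β}
    (hΨ : MeasurePreserving Ψ μ ν) {S : Set α} {T : Set β} (hT : MeasurableSet T)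
    (hST : MapsTo Ψ S T) (hf : AEStronglyMeasurable f (ν.restrict T)) :
    eLpNorm (fun x ↦ f (Ψ x)) p (μ.restrict S) ≤ eLpNorm f p (ν.restrict T) :=
  calc eLpNorm (f ∘ Ψ) p (μ.restrict S) ≤ eLpNorm (f ∘ Ψ) p (μ.restrict (Ψ ⁻¹' T)) :=
        eLpNorm_mono_measure _ (Measure.restrict_mono hST le_rfl)
    _ = eLpNorm f p (ν.restrict T) :=
        eLpNorm_comp_measurePreserving hf (hΨ.restrict_preimage hT)

lemma eLpNorm_restrict_biUnion_le [NormedAddCommGroup F] {ι : Type*} (hp : 1 ≤ p) {f : α → F}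
    (hf : StronglyMeasurable f) (t : Finset ι) {S : ι → Set α}
    (hS : ∀ i ∈ t, MeasurableSet (S i)) :
    eLpNorm f p (μ.restrict (⋃ i ∈ t, S i)) ≤ ∑ i ∈ t, eLpNorm f p (μ.restrict (S i)) := by
  have hpt : ∀ x, ‖(⋃ i ∈ t, S i).indicator f x‖ ≤
      ‖(∑ i ∈ t, fun x ↦ ‖(S i).indicator f x‖) x‖ := by
    intro x
    rw [Finset.sum_apply, Real.norm_of_nonneg (Finset.sum_nonneg fun i _ ↦ norm_nonneg _)]
    by_cases hx : x ∈ ⋃ i ∈ t, S i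
    · obtain ⟨i, hi, hxi⟩ := mem_iUnion₂.1 hx
      rw [indicator_of_mem hx, ← indicator_of_mem hxi f]
      exact Finset.single_le_sum (f := fun i ↦ ‖(S i).indicator f x‖)
        (fun _ _ ↦ norm_nonneg _) hi
    · rw [indicator_of_notMem hx, norm_zero]
      exact Finset.sum_nonneg fun _ _ ↦ norm_nonneg _
  calc eLpNorm f p (μ.restrict (⋃ i ∈ t, S i)) = eLpNorm ((⋃ i ∈ t, S i).indicator f) p μ :=
        (eLpNorm_indicator_eq_eLpNorm_restrict (Finset.measurableSet_biUnion t hS)).symm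
    _ ≤ eLpNorm (∑ i ∈ t, fun x ↦ ‖(S i).indicator f x‖) p μ := eLpNorm_mono hpt
    _ ≤ ∑ i ∈ t, eLpNorm (fun x ↦ ‖(S i).indicator f x‖) p μ :=
        eLpNorm_sum_le (fun i hi ↦ (hf.indicator (hS i hi)).norm.aestronglyMeasurable) hp
    _ = ∑ i ∈ t, eLpNorm f p (μ.restrict (S i)) :=
        Finset.sum_congr rfl fun i hi ↦ by
          rw [eLpNorm_norm, eLpNorm_indicator_eq_eLpNorm_restrict (hS i hi)]

end Measure

section Lipschitz

variable {n : ℕ} {K : ℝ≥0}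

lemma volume_image_le_of_lipschitzOnWith {Φ : En n → En n} {B : Set (En n)}
    (hΦ : LipschitzOnWith K Φ B) : volume (Φ '' B) ≤ K ^ n * volume B := by
  have hH := hΦ.hausdorffMeasure_image_le (d := (n : ℝ)) n.cast_nonneg
  rw [ENNReal.rpow_natCast] at hH
  rw [← EuclideanSpace.euclideanHausdorffMeasure_eq_volume, Measure.euclideanHausdorffMeasure_def]
  simp only [Measure.smul_apply, ENNReal.smul_def, smul_eq_mul]
  rw [mul_left_comm]
  gcongr

lemma restrict_prod_le_smul_map_of_lipschitzOnWith {α : Type*} [MeasurableSpace α] {μ : Measure α}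
    [SFinite μ] {Φ : α → En n → En n} (hΦ : Measurable fun p : α × En n ↦ Φ p.1 p.2)
    {U : Set α} (hU : MeasurableSet U) {B : Set (En n)}
    (hLip : ∀ u ∈ U, LipschitzOnWith K (Φ u) B) {Z : Set (α × En n)} (hZ : MeasurableSet Z)
    (hZU : ∀ p ∈ Z, p.1 ∈ U ∧ p.2 ∈ Φ p.1 '' B) :
    (μ.prod volume).restrict Z ≤ (K ^ n : ℝ≥0∞) •
      Measure.map (fun p : α × En n ↦ (p.1, Φ p.1 p.2))
        ((μ.restrict U).prod (volume.restrict B)) := by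
  have hmap : Measurable fun p : α × En n ↦ (p.1, Φ p.1 p.2) := measurable_fst.prodMk hΦ
  refine Measure.le_iff.2 fun A hA ↦ ?_
  have hslice : ∀ u, volume (Prod.mk u ⁻¹' (A ∩ Z)) ≤
      U.indicator (fun u ↦ K ^ n * volume.restrict B {v | (u, Φ u v) ∈ A}) u := by
    intro u
    by_cases hu : u ∈ U
    · have hAu : MeasurableSet {v | (u, Φ u v) ∈ A} := measurable_prodMk_left (hmap hA)
      rw [indicator_of_mem hu, Measure.restrict_apply hAu]
      refine (measure_mono ?_).trans
        (volume_image_le_of_lipschitzOnWith ((hLip u hu).mono inter_subset_right))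
      rintro y ⟨hyA, hyZ⟩
      obtain ⟨v, hv, hvy : Φ u v = y⟩ := (hZU _ hyZ).2
      subst hvy
      exact ⟨v, ⟨hyA, hv⟩, rfl⟩
    · have hempty : Prod.mk u ⁻¹' (A ∩ Z) = ∅ :=
        eq_empty_of_forall_notMem fun y hy ↦ hu (hZU _ hy.2).1
      rw [hempty, measure_empty]
      exact bot_le
  calc (μ.prod volume).restrict Z A = ∫⁻ u, volume (Prod.mk u ⁻¹' (A ∩ Z)) ∂μ := by
        rw [Measure.restrict_apply hA, Measure.prod_apply (hA.inter hZ)]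
    _ ≤ ∫⁻ u in U, K ^ n * volume.restrict B {v | (u, Φ u v) ∈ A} ∂μ := by
        rw [← lintegral_indicator hU]
        exact lintegral_mono hslice
    _ = _ := by
        rw [lintegral_const_mul' _ _ (by finiteness), Measure.smul_apply,
          Measure.map_apply hmap hA, Measure.prod_apply (hmap hA), smul_eq_mul]
        rfl

lemma eLpNorm_restrict_prod_le_of_lipschitzOnWith {α F : Type*} [MeasurableSpace α] {μ : Measure α}
    [SFinite μ] [NormedAddCommGroup F] (hK : K ≠ 0) {Φ : α → En n → En n}
    (hΦ : Measurable fun p : α × En n ↦ Φ p.1 p.2) {U : Set α} (hU : MeasurableSet U)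
    {B : Set (En n)} (hB : MeasurableSet B) (hLip : ∀ u ∈ U, LipschitzOnWith K (Φ u) B)
    {Z : Set (α × En n)} (hZ : MeasurableSet Z) (hZU : ∀ p ∈ Z, p.1 ∈ U ∧ p.2 ∈ Φ p.1 '' B)
    {f : α × En n → F} (hf : StronglyMeasurable f) {p M : ℝ≥0∞}
    (hM : ∀ v ∈ B, eLpNorm (fun u ↦ f (u, Φ u v)) p (μ.restrict U) ≤ M) :
    eLpNorm f p ((μ.prod volume).restrict Z) ≤ (K ^ n * volume B) ^ (1 / p).toReal * M := by
  let Ψ : En n × α → α × En n := fun q ↦ (q.2, Φ q.2 q.1)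
  have hΨ : Measurable Ψ := measurable_snd.prodMk (hΦ.comp measurable_swap)
  have hmap : Measure.map (fun p : α × En n ↦ (p.1, Φ p.1 p.2))
      ((μ.restrict U).prod (volume.restrict B)) =
        Measure.map Ψ ((volume.restrict B).prod (μ.restrict U)) := by
    rw [← Measure.prod_swap, Measure.map_map (measurable_fst.prodMk hΦ) measurable_swap]
    rfl
  have hslice : ∀ᵐ v ∂volume.restrict B, eLpNorm (fun u ↦ (f ∘ Ψ) (v, u)) p (μ.restrict U) ≤ M :=
    (ae_restrict_mem hB).mono hM
  calc eLpNorm f p ((μ.prod volume).restrict Z)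
      ≤ eLpNorm f p ((K ^ n : ℝ≥0∞) • Measure.map Ψ ((volume.restrict B).prod (μ.restrict U))) :=
        eLpNorm_mono_measure _
          (hmap ▸ restrict_prod_le_smul_map_of_lipschitzOnWith hΦ hU hLip hZ hZU)
    _ = (K ^ n : ℝ≥0∞) ^ (1 / p).toReal *
          eLpNorm (f ∘ Ψ) p ((volume.restrict B).prod (μ.restrict U)) := by
        rw [eLpNorm_smul_measure_of_ne_zero (by simp [hK]), smul_eq_mul,
          eLpNorm_map_measure hf.aestronglyMeasurable hΨ.aemeasurable]
    _ ≤ (K ^ n : ℝ≥0∞) ^ (1 / p).toReal * (volume B ^ (1 / p).toReal * M) := by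
        gcongr
        simpa using eLpNorm_prod_le_of_forall_slice (hf.comp_measurable hΨ) hslice
    _ = (K ^ n * volume B) ^ (1 / p).toReal * M := by
        rw [ENNReal.mul_rpow_of_nonneg _ _ ENNReal.toReal_nonneg, mul_assoc]

end Lipschitz

section Modulus

lemma eLpNorm_restrict_ball_eq_mul_eLpNorm_toSphere {E F : Type*} [NormedAddCommGroup E]
    [NormedSpace ℝ E] [FiniteDimensional ℝ E] [Nontrivial E] [MeasurableSpace E] [BorelSpace E]
    (μ : Measure E) [μ.IsAddHaarMeasure] [NormedAddCommGroup F] {f : E → F}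
    (hf : StronglyMeasurable f) (hhom : ∀ t : ℝ, 0 < t → ∀ x, f (t • x) = f x) {R : ℝ} (hR : 0 < R)
    (s : ℝ≥0∞) :
    eLpNorm f s (μ.restrict (ball 0 R)) =
      ENNReal.ofReal (R ^ Module.finrank ℝ E / Module.finrank ℝ E) ^ (1 / s).toReal *
        eLpNorm (fun x : sphere (0 : E) 1 ↦ f x) s μ.toSphere := by
  let ι : ({0}ᶜ : Set E) → E := Subtype.val
  let polar := homeomorphUnitSphereProd E
  let radial := Measure.volumeIoiPow (Module.finrank ℝ E - 1)
  have hι : MeasurableEmbedding ι := .subtype_coe (measurableSet_singleton _).compl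
  have hμ : μ = Measure.map ι (Measure.comap ι μ) := by
    rw [hι.map_comap, Subtype.range_coe, restrict_compl_singleton]
  let radius : Ioi (0 : ℝ) := ⟨R, hR⟩
  have hball : ι ⁻¹' ball 0 R = polar ⁻¹' (univ ×ˢ Iio radius) := by
    ext x
    simp [ι, polar, radius, ← Subtype.coe_lt_coe]
  have hcomp : f ∘ ι = (fun p : sphere (0 : E) 1 × Ioi (0 : ℝ) ↦ f p.1) ∘ polar := by
    funext x
    have hx : 0 < ‖(x : E)‖ := norm_pos_iff.2 x.2
    simp [ι, polar, hhom _ (inv_pos.2 hx)]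
  have hdim : 0 < Module.finrank ℝ E := Module.finrank_pos
  have hradial : radial (Iio radius) =
      ENNReal.ofReal (R ^ Module.finrank ℝ E / Module.finrank ℝ E) := by
    rw [Measure.volumeIoiPow_apply_Iio, Nat.sub_add_cancel hdim, Nat.cast_sub hdim]
    simp [radius]
  have hfs : StronglyMeasurable fun x : sphere (0 : E) 1 ↦ f x :=
    hf.comp_measurable measurable_subtype_coe
  calc eLpNorm f s (μ.restrict (ball 0 R))
      = eLpNorm (f ∘ ι) s ((Measure.comap ι μ).restrict (ι ⁻¹' ball 0 R)) := by
        conv_lhs => rw [hμ]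
        rw [hι.restrict_map, hι.eLpNorm_map_measure]
    _ = eLpNorm (fun p : sphere (0 : E) 1 × Ioi (0 : ℝ) ↦ f p.1) s
          (μ.toSphere.prod (radial.restrict (Iio radius))) := by
        have hpolar := (Measure.measurePreserving_homeomorphUnitSphereProd μ).restrict_preimage
          (MeasurableSet.univ.prod (measurableSet_Iio (a := radius)))
        rw [← Measure.prod_restrict, Measure.restrict_univ] at hpolar
        rw [hball, hcomp]
        exact eLpNorm_comp_measurePreserving
          (hfs.comp_measurable measurable_fst).aestronglyMeasurable hpolar
    _ = _ := by
        rw [eLpNorm_comp_fst_prod hfs.aestronglyMeasurable, Measure.restrict_apply_univ, hradial]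
        rw [Measure.restrict_apply_univ, hradial, ne_eq, ENNReal.ofReal_eq_zero, not_le]
        positivity

variable {n : ℕ} {Ω : En n → ℝ} {s : ℝ≥0∞} {R δ : ℝ} {ρ : En n ≃ₗᵢ[ℝ] En n}

lemma HomZero.apply_smul (hΩ : HomZero Ω) {t : ℝ} (ht : 0 < t) (x : En n) : Ω (t • x) = Ω x := by
  rcases eq_or_ne x 0 with rfl | hx
  · rw [smul_zero]
  · exact hΩ t ht x hx

/-- The ratio between the `L^s` norms on the ball of radius `R` and on the unit sphere of a function
that is constant along rays, see `HomZero.eLpNorm_restrict_ball`. -/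
def radialFactor (n : ℕ) (R : ℝ) (s : ℝ≥0∞) : ℝ≥0∞ := ENNReal.ofReal (R ^ n / n) ^ (1 / s).toReal

lemma radialFactor_ne_zero [NeZero n] (hR : 0 < R) : radialFactor n R s ≠ 0 := by
  have hn : 0 < n := NeZero.pos n
  have h : 0 < ENNReal.ofReal (R ^ n / n) := ENNReal.ofReal_pos.2 (by positivity)
  exact (ENNReal.rpow_pos h ENNReal.ofReal_ne_top).ne'

lemma radialFactor_ne_top : radialFactor n R s ≠ ⊤ :=
  ENNReal.rpow_ne_top_of_nonneg ENNReal.toReal_nonneg ENNReal.ofReal_ne_top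

lemma HomZero.eLpNorm_restrict_ball [NeZero n] (hΩ : HomZero Ω) (hm : Measurable Ω) (hR : 0 < R) :
    eLpNorm Ω s (volume.restrict (ball 0 R)) = radialFactor n R s * sphereLpNorm s Ω := by
  rw [eLpNorm_restrict_ball_eq_mul_eLpNorm_toSphere volume hm.stronglyMeasurable
    (fun t ht x ↦ hΩ.apply_smul ht x) hR, finrank_euclideanSpace_fin]
  rfl

lemma HomZero.comp_sub (hΩ : HomZero Ω) (ρ : En n ≃ₗᵢ[ℝ] En n) :
    HomZero fun x ↦ Ω (ρ x) - Ω x := fun t ht x _ ↦ by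
  simp only [map_smul, hΩ.apply_smul ht]

/-- The integral modulus of continuity `ω_s` before truncation to `ℝ`: `modCont s Ω δ` is by
definition the real part of `eModCont s Ω δ`, hence a junk value when the latter is infinite. -/
def eModCont (s : ℝ≥0∞) (Ω : En n → ℝ) (δ : ℝ) : ℝ≥0∞ :=
  ⨆ ρ : {ρ : En n ≃ₗᵢ[ℝ] En n // IsRotation ρ ∧ rotNorm ρ < δ},
    sphereLpNorm s fun x ↦ Ω (ρ.1 x) - Ω x

lemma sphereLpNorm_comp_sub_le_eModCont (hρ : IsRotation ρ) (hρδ : rotNorm ρ < δ) :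
    sphereLpNorm s (fun x ↦ Ω (ρ x) - Ω x) ≤ eModCont s Ω δ :=
  le_iSup (fun ρ : {ρ : En n ≃ₗᵢ[ℝ] En n // IsRotation ρ ∧ rotNorm ρ < δ} ↦
    sphereLpNorm s fun x ↦ Ω (ρ.1 x) - Ω x) ⟨ρ, hρ, hρδ⟩

lemma monotone_eModCont : Monotone (eModCont s Ω) := fun _ _ h ↦
  iSup_le fun ρ ↦ sphereLpNorm_comp_sub_le_eModCont ρ.2.1 (ρ.2.2.trans_le h)

lemma eLpNorm_comp_linearIsometryEquiv_restrict_ball (hm : Measurable Ω)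
    (ρ : En n ≃ₗᵢ[ℝ] En n) :
    eLpNorm (fun x ↦ Ω (ρ x)) s (volume.restrict (ball 0 R)) =
      eLpNorm Ω s (volume.restrict (ball 0 R)) := by
  have hρ := ρ.measurePreserving.restrict_preimage (measurableSet_ball (x := 0) (ε := R))
  rw [ρ.preimage_ball, map_zero] at hρ
  exact eLpNorm_comp_measurePreserving hm.aestronglyMeasurable hρ

lemma HomZero.eModCont_le [NeZero n] (hΩ : HomZero Ω) (hm : Measurable Ω) (hs : 1 ≤ s) :
    eModCont s Ω δ ≤ 2 * sphereLpNorm s Ω := by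
  refine iSup_le fun ρ ↦ ?_
  have hmρ : Measurable fun x ↦ Ω (ρ.1 x) := hm.comp ρ.1.continuous.measurable
  refine (ENNReal.mul_le_mul_iff_right (radialFactor_ne_zero (n := n) (s := s) one_pos)
    radialFactor_ne_top).1 ?_
  calc radialFactor n 1 s * sphereLpNorm s (fun x ↦ Ω (ρ.1 x) - Ω x)
      = eLpNorm (fun x ↦ Ω (ρ.1 x) - Ω x) s (volume.restrict (ball 0 1)) :=
        ((hΩ.comp_sub ρ.1).eLpNorm_restrict_ball (hmρ.sub hm) one_pos).symm
    _ ≤ eLpNorm (fun x ↦ Ω (ρ.1 x)) s (volume.restrict (ball 0 1)) +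
          eLpNorm Ω s (volume.restrict (ball 0 1)) :=
        eLpNorm_sub_le hmρ.aestronglyMeasurable hm.aestronglyMeasurable hs
    _ = radialFactor n 1 s * (2 * sphereLpNorm s Ω) := by
        rw [eLpNorm_comp_linearIsometryEquiv_restrict_ball hm,
          hΩ.eLpNorm_restrict_ball hm one_pos]
        ring

lemma HomZero.eModCont_ne_top [NeZero n] (hΩ : HomZero Ω) (hm : Measurable Ω) (hs : 1 ≤ s)
    (hΩs : sphereLpNorm s Ω ≠ ⊤) : eModCont s Ω δ ≠ ⊤ :=
  ne_top_of_le_ne_top (ENNReal.mul_ne_top ENNReal.ofNat_ne_top hΩs) (hΩ.eModCont_le hm hs)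

lemma HomZero.monotone_modCont [NeZero n] (hΩ : HomZero Ω) (hm : Measurable Ω) (hs : 1 ≤ s)
    (hΩs : sphereLpNorm s Ω ≠ ⊤) : Monotone (modCont s Ω) := fun _ _ h ↦
  ENNReal.toReal_mono (hΩ.eModCont_ne_top hm hs hΩs) (monotone_eModCont h)

lemma HomZero.eLpNorm_comp_sub_restrict_ball_le [NeZero n] (hΩ : HomZero Ω) (hm : Measurable Ω)
    (hR : 0 < R) (hρ : IsRotation ρ) (hρδ : rotNorm ρ < δ) :
    eLpNorm (fun x ↦ Ω (ρ x) - Ω x) s (volume.restrict (ball 0 R)) ≤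
      radialFactor n R s * eModCont s Ω δ := by
  rw [(hΩ.comp_sub ρ).eLpNorm_restrict_ball ((hm.comp ρ.continuous.measurable).sub hm) hR]
  gcongr
  exact sphereLpNorm_comp_sub_le_eModCont hρ hρδ

end Modulus

section NearDiagonal

/-- The points of `ball 0 R` whose component along `e` is at least `c`: the region in which the
estimate near the axis `e` is carried out. -/
def axialSector {E : Type*} [NormedAddCommGroup E] [InnerProductSpace ℝ E] (e : E) (c R : ℝ) :
    Set E := {u | c ≤ ⟪e, u⟫ ∧ ‖u‖ < R}

/-- The pairs of points at distance less than `ε`, the first of which lies in `U`. -/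
def nearDiagonal {E : Type*} [PseudoMetricSpace E] (U : Set E) (ε : ℝ) : Set (E × E) :=
  {p | p.1 ∈ U ∧ dist p.2 p.1 < ε}

lemma measurableSet_axialSector {E : Type*} [NormedAddCommGroup E] [InnerProductSpace ℝ E]
    [MeasurableSpace E] [OpensMeasurableSpace E] (e : E) (c R : ℝ) :
    MeasurableSet (axialSector e c R) := by
  have hinner : IsClosed {u | c ≤ ⟪e, u⟫} := isClosed_le (by fun_prop) (by fun_prop)
  have hnorm : IsOpen {u : E | ‖u‖ < R} := isOpen_lt (by fun_prop) (by fun_prop)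
  exact hinner.measurableSet.inter hnorm.measurableSet

lemma measurableSet_nearDiagonal {E : Type*} [PseudoMetricSpace E] [SecondCountableTopology E]
    [MeasurableSpace E] [OpensMeasurableSpace E] {U : Set E} (hU : MeasurableSet U) (ε : ℝ) :
    MeasurableSet (nearDiagonal U ε) := by
  have hdist : IsOpen {p : E × E | dist p.2 p.1 < ε} := isOpen_lt (by fun_prop) (by fun_prop)
  exact (measurable_fst hU).inter hdist.measurableSet

lemma lipschitzOnWith_scaledReflection {E : Type*} [NormedAddCommGroup E] [InnerProductSpace ℝ E]
    {w : E} {R r : ℝ≥0} (hw : ‖w‖ ≤ r) :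
    LipschitzOnWith (6 * R * r) (fun v ↦ scaledReflection v w) (ball 0 R) :=
  .of_dist_le_mul fun v hv v' hv' ↦ by
    rw [mem_ball_zero_iff] at hv hv'
    rw [dist_eq_norm, dist_eq_norm]
    calc ‖scaledReflection v w - scaledReflection v' w‖ ≤ 3 * (‖v‖ + ‖v'‖) * ‖w‖ * ‖v - v'‖ :=
          norm_scaledReflection_sub_le v v' w
      _ ≤ 3 * (R + R) * r * ‖v - v'‖ := by gcongr
      _ = (6 * R * r : ℝ≥0) * ‖v - v'‖ := by push_cast; ring

variable {n : ℕ} {Ω : En n → ℝ} {s : ℝ≥0∞} {e : En n} {c ε : ℝ}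

lemma exists_scaledReflection_reflection_eq_of_mem_nearDiagonal (he : ‖e‖ = 1) (hεc : 3 * ε ≤ c)
    {p : En n × En n} (hp : p ∈ nearDiagonal (axialSector e c 3) ε) :
    p.2 ∈ (fun v ↦ scaledReflection v ((ℝ ∙ e)ᗮ.reflection p.1)) '' ball e (3 * ε / c) := by
  obtain ⟨⟨hc, -⟩, hε⟩ := hp
  rw [dist_eq_norm] at hε
  have hε0 : 0 < ε := (norm_nonneg _).trans_lt hε
  obtain ⟨v, hv, hvp⟩ := exists_scaledReflection_reflection_eq (y := p.2) (u := p.1) he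
    (by linarith)
  refine ⟨v, ?_, hvp⟩
  rw [mem_ball, dist_eq_norm]
  calc ‖v - e‖ ≤ 3 * ‖p.2 - p.1‖ / ⟪e, p.1⟫ := hv
    _ ≤ 3 * ‖p.2 - p.1‖ / c := by gcongr; linarith
    _ < 3 * ε / c := by gcongr; linarith

lemma HomZero.eLpNorm_scaledReflection_sub_le [NeZero n] (hΩ : HomZero Ω) (hm : Measurable Ω)
    (he : ‖e‖ = 1) {v : En n} {δ : ℝ} (hδ : δ ≤ 1) (hv : ‖v - e‖ < δ) :
    eLpNorm (fun u ↦ Ω (scaledReflection v ((ℝ ∙ e)ᗮ.reflection u)) - Ω u) s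
      (volume.restrict (ball 0 3)) ≤ radialFactor n 3 s * eModCont s Ω (12 * δ) := by
  have hv0 : v ≠ 0 := by
    rintro rfl
    rw [zero_sub, norm_neg, he] at hv
    exact hv.not_ge hδ
  have hrot : rotNorm (reflectionRotation e v) < 12 * δ :=
    (rotNorm_reflectionRotation_le he hv0).trans_lt (by linarith)
  simp only [scaledReflection_reflection_eq_smul_reflectionRotation,
    hΩ.apply_smul (show 0 < ‖v‖ ^ 2 by positivity)]
  exact hΩ.eLpNorm_comp_sub_restrict_ball_le hm three_pos
    (isRotation_reflectionRotation (norm_ne_zero_iff.1 (by simp [he])) hv0) hrot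

lemma HomZero.eLpNorm_sub_nearDiagonal_le [NeZero n] (hΩ : HomZero Ω) (hm : Measurable Ω)
    (he : ‖e‖ = 1) (hc : 0 < c) (hεc : 3 * ε ≤ c) :
    eLpNorm (fun p : En n × En n ↦ Ω p.2 - Ω p.1) s
        (volume.restrict (nearDiagonal (axialSector e c 3) ε)) ≤
      (36 ^ n * volume (ball e (3 * ε / c))) ^ (1 / s).toReal *
        (radialFactor n 3 s * eModCont s Ω (12 * (3 * ε / c))) := by
  set U := axialSector e c 3
  set B := ball e (3 * ε / c)
  have hδ : 3 * ε / c ≤ 1 := (div_le_one hc).2 hεc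
  let Φ : En n → En n → En n := fun u v ↦ scaledReflection v ((ℝ ∙ e)ᗮ.reflection u)
  have hΦ : Measurable fun p : En n × En n ↦ Φ p.1 p.2 :=
    (continuous_scaledReflection.comp (by fun_prop :
      Continuous fun p : En n × En n ↦ (p.2, (ℝ ∙ e)ᗮ.reflection p.1))).measurable
  have hLip : ∀ u ∈ U, LipschitzOnWith 36 (Φ u) B := by
    rintro u ⟨-, hu⟩
    have hB2 : B ⊆ ball 0 (2 : ℝ≥0) := ball_subset_ball' (by
      rw [dist_zero_right, he]
      push_cast
      linarith)
    have h36 := lipschitzOnWith_scaledReflection (R := 2) (r := 3)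
      (w := (ℝ ∙ e)ᗮ.reflection u) (by simpa using hu.le)
    norm_num at h36
    exact h36.mono hB2
  have hdiff : Measurable fun p : En n × En n ↦ Ω p.2 - Ω p.1 :=
    (hm.comp measurable_snd).sub (hm.comp measurable_fst)
  refine eLpNorm_restrict_prod_le_of_lipschitzOnWith (K := 36) (by norm_num) hΦ
    (measurableSet_axialSector e c 3) measurableSet_ball hLip
    (measurableSet_nearDiagonal (measurableSet_axialSector e c 3) ε)
    (fun p hp ↦ ⟨hp.1, exists_scaledReflection_reflection_eq_of_mem_nearDiagonal he hεc hp⟩)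
    hdiff.stronglyMeasurable fun v hv ↦ ?_
  have hU : U ⊆ ball 0 3 := fun u hu ↦ mem_ball_zero_iff.2 hu.2
  exact (eLpNorm_mono_measure _ (Measure.restrict_mono hU le_rfl)).trans
    (hΩ.eLpNorm_scaledReflection_sub_le hm he hδ (by rwa [← dist_eq_norm]))

end NearDiagonal

section Translation

variable {E : Type*} [NormedAddCommGroup E] [NormedSpace ℝ E]

lemma norm_lt_of_mem_ball_half {κ h : E} (hh : h ∈ ball ((1 / 2 : ℝ) • κ) (‖κ‖ / 2)) :
    ‖h‖ < ‖κ‖ := by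
  rw [mem_ball, dist_eq_norm] at hh
  calc ‖h‖ ≤ ‖h - (1 / 2 : ℝ) • κ‖ + ‖(1 / 2 : ℝ) • κ‖ := norm_le_norm_sub_add _ _
    _ < ‖κ‖ / 2 + ‖κ‖ / 2 := by
        rw [norm_smul, Real.norm_of_nonneg (by norm_num)]
        linarith
    _ = ‖κ‖ := add_halves _

lemma norm_sub_lt_of_mem_ball_half {κ h : E} (hh : h ∈ ball ((1 / 2 : ℝ) • κ) (‖κ‖ / 2)) :
    ‖h - κ‖ < ‖κ‖ := by
  rw [norm_sub_rev]
  refine norm_lt_of_mem_ball_half ?_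
  have hneg : κ - h - (1 / 2 : ℝ) • κ = -(h - (1 / 2 : ℝ) • κ) := by module
  rwa [mem_ball, dist_eq_norm, hneg, norm_neg, ← dist_eq_norm]

lemma measurePreserving_add_const_prod_add {G : Type*} [AddCommGroup G] [MeasurableSpace G]
    [MeasurableAdd₂ G] (μ : Measure G) [SFinite μ] [μ.IsAddLeftInvariant] (a : G) :
    MeasurePreserving (fun z : G × G ↦ (z.1 + a, z.1 + z.2)) (μ.prod μ) (μ.prod μ) := by
  convert (measurePreserving_prod_add μ μ).comp
    ((measurePreserving_add_right μ a).prod (measurePreserving_add_right μ (-a))) using 1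
  funext z
  refine Prod.ext rfl ?_
  change z.1 + z.2 = z.1 + a + (z.2 + -a)
  abel

lemma measure_ball_rpow_mul_eLpNorm_comp_add_sub_le {F : Type*} [NormedAddCommGroup F]
    [MeasurableSpace E] [BorelSpace E] [SecondCountableTopology E] {μ : Measure E} [SFinite μ]
    [μ.IsAddLeftInvariant] [μ.IsOpenPosMeasure] {p : ℝ≥0∞} (hp : 1 ≤ p) {f : E → F}
    (hf : StronglyMeasurable f) {κ : E} (hκ : κ ≠ 0) {P U : Set E} (hU : MeasurableSet U)
    (hPU : P ⊆ U) (hPκ : ∀ u ∈ P, u + κ ∈ U) :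
    μ (ball ((1 / 2 : ℝ) • κ) (‖κ‖ / 2)) ^ (1 / p).toReal *
        eLpNorm (fun u ↦ f (u + κ) - f u) p (μ.restrict P) ≤
      2 * eLpNorm (fun q : E × E ↦ f q.2 - f q.1) p
        ((μ.prod μ).restrict (nearDiagonal U ‖κ‖)) := by
  set H := ball ((1 / 2 : ℝ) • κ) (‖κ‖ / 2)
  let g : E × E → F := fun q ↦ f q.2 - f q.1
  have hg : StronglyMeasurable g :=
    (hf.comp_measurable measurable_snd).sub (hf.comp_measurable measurable_fst)
  have hZ : MeasurableSet (nearDiagonal U ‖κ‖) := measurableSet_nearDiagonal hU _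
  let Ψ₁ : E × E → E × E := fun z ↦ (z.1, z.1 + z.2)
  let Ψ₂ : E × E → E × E := fun z ↦ (z.1 + κ, z.1 + z.2)
  have hΨ₁ : MeasurePreserving Ψ₁ (μ.prod μ) (μ.prod μ) := measurePreserving_prod_add μ μ
  have hΨ₂ : MeasurePreserving Ψ₂ (μ.prod μ) (μ.prod μ) := measurePreserving_add_const_prod_add μ κ
  have hΨ₁Z : MapsTo Ψ₁ (P ×ˢ H) (nearDiagonal U ‖κ‖) := fun z hz ↦
    ⟨hPU hz.1, by simpa [Ψ₁, dist_eq_norm] using norm_lt_of_mem_ball_half hz.2⟩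
  have hΨ₂Z : MapsTo Ψ₂ (P ×ˢ H) (nearDiagonal U ‖κ‖) := fun z hz ↦
    ⟨hPκ _ hz.1, by simpa [Ψ₂, dist_eq_norm] using norm_sub_lt_of_mem_ball_half hz.2⟩
  have hsplit : (fun z : E × E ↦ f (z.1 + κ) - f z.1) = g ∘ Ψ₁ - g ∘ Ψ₂ := by
    funext z
    simp [g, Ψ₁, Ψ₂]
  calc μ H ^ (1 / p).toReal * eLpNorm (fun u ↦ f (u + κ) - f u) p (μ.restrict P)
      = eLpNorm (fun z : E × E ↦ f (z.1 + κ) - f z.1) p ((μ.prod μ).restrict (P ×ˢ H)) := by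
        rw [← Measure.prod_restrict, eLpNorm_comp_fst_prod (f := fun u ↦ f (u + κ) - f u)
          ((hf.comp_measurable (measurable_add_const κ)).sub hf).aestronglyMeasurable
          (by simpa [H] using (measure_ball_pos μ _ (by positivity)).ne'),
          Measure.restrict_apply_univ]
    _ ≤ eLpNorm (g ∘ Ψ₁) p ((μ.prod μ).restrict (P ×ˢ H)) +
          eLpNorm (g ∘ Ψ₂) p ((μ.prod μ).restrict (P ×ˢ H)) := by
        rw [hsplit]
        exact eLpNorm_sub_le (hg.comp_measurable hΨ₁.measurable).aestronglyMeasurable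
          (hg.comp_measurable hΨ₂.measurable).aestronglyMeasurable hp
    _ ≤ eLpNorm g p ((μ.prod μ).restrict (nearDiagonal U ‖κ‖)) +
          eLpNorm g p ((μ.prod μ).restrict (nearDiagonal U ‖κ‖)) :=
        add_le_add
          (eLpNorm_comp_restrict_le_of_mapsTo hΨ₁ hZ hΨ₁Z hg.aestronglyMeasurable)
          (eLpNorm_comp_restrict_le_of_mapsTo hΨ₂ hZ hΨ₂Z hg.aestronglyMeasurable)
    _ = 2 * eLpNorm g p ((μ.prod μ).restrict (nearDiagonal U ‖κ‖)) := (two_mul _).symm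

end Translation

section SmallTranslation

lemma exists_finset_half_norm_le_inner (E : Type*) [NormedAddCommGroup E] [InnerProductSpace ℝ E]
    [FiniteDimensional ℝ E] :
    ∃ t : Finset E, (∀ e ∈ t, ‖e‖ = 1) ∧ ∀ u ≠ 0, ∃ e ∈ t, ‖u‖ / 2 ≤ ⟪e, u⟫ := by
  have hopen : ∀ e : E, IsOpen {w : E | 1 / 2 < ⟪e, w⟫} := fun e ↦
    isOpen_lt (by fun_prop) (by fun_prop)
  obtain ⟨t, ht, hcover⟩ := (isCompact_sphere (0 : E) 1).elim_nhds_subcover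
    (fun e ↦ {w : E | 1 / 2 < ⟪e, w⟫}) fun e he ↦ (hopen e).mem_nhds (by
      simp only [mem_ofPred_eq, real_inner_self_eq_norm_sq, mem_sphere_zero_iff_norm.1 he]
      norm_num)
  refine ⟨t, fun e he ↦ mem_sphere_zero_iff_norm.1 (ht e he), fun u hu ↦ ?_⟩
  have hu' : 0 < ‖u‖ := norm_pos_iff.2 hu
  have hunit : ‖u‖⁻¹ • u ∈ sphere (0 : E) 1 :=
    mem_sphere_zero_iff_norm.2 (norm_smul_inv_norm (𝕜 := ℝ) hu)
  obtain ⟨e, he, heu : 1 / 2 < ⟪e, ‖u‖⁻¹ • u⟫⟩ := mem_iUnion₂.1 (hcover hunit)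
  rw [real_inner_smul_right, ← div_eq_inv_mul, lt_div_iff₀ hu'] at heu
  exact ⟨e, he, by linarith⟩

lemma eLpNorm_comp_add_nsmul_sub_le {G F : Type*} [AddMonoid G] [MeasurableSpace G]
    [MeasurableAdd G] {μ : Measure G} [μ.IsAddRightInvariant] [NormedAddCommGroup F] {p M : ℝ≥0∞}
    (hp : 1 ≤ p) {f : G → F} (hf : StronglyMeasurable f) {S T : Set G} (hT : MeasurableSet T)
    {κ : G} (hM : eLpNorm (fun u ↦ f (u + κ) - f u) p (μ.restrict T) ≤ M) {N : ℕ}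
    (hST : ∀ k < N, ∀ u ∈ S, u + k • κ ∈ T) :
    eLpNorm (fun u ↦ f (u + N • κ) - f u) p (μ.restrict S) ≤ N * M := by
  have hadd : ∀ a : G, StronglyMeasurable fun u ↦ f (u + a) := fun a ↦
    hf.comp_measurable (measurable_add_const a)
  induction N with
  | zero => simp
  | succ N ih =>
    have hsplit : (fun u ↦ f (u + (N + 1) • κ) - f u) =
        (fun u ↦ f (u + N • κ + κ) - f (u + N • κ)) + fun u ↦ f (u + N • κ) - f u := by
      funext u
      simp [succ_nsmul, add_assoc]
    have hstep : eLpNorm (fun u ↦ f (u + N • κ + κ) - f (u + N • κ)) p (μ.restrict S) ≤ M :=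
      (eLpNorm_comp_restrict_le_of_mapsTo (f := fun u ↦ f (u + κ) - f u)
        (measurePreserving_add_right μ (N • κ)) hT (fun u hu ↦ hST N N.lt_succ_self u hu)
        ((hadd κ).sub hf).aestronglyMeasurable).trans hM
    calc eLpNorm (fun u ↦ f (u + (N + 1) • κ) - f u) p (μ.restrict S)
        ≤ eLpNorm (fun u ↦ f (u + N • κ + κ) - f (u + N • κ)) p (μ.restrict S) +
            eLpNorm (fun u ↦ f (u + N • κ) - f u) p (μ.restrict S) := by
          rw [hsplit]
          exact eLpNorm_add_le
            (((hadd κ).sub hf).comp_measurable (measurable_add_const (N • κ))).aestronglyMeasurable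
            ((hadd _).sub hf).aestronglyMeasurable hp
      _ ≤ M + N * M := add_le_add hstep (ih fun k hk ↦ hST k (hk.trans N.lt_succ_self))
      _ = (N + 1 : ℕ) * M := by push_cast; ring

variable {n : ℕ} {Ω : En n → ℝ} {s : ℝ≥0∞}

lemma HomZero.eLpNorm_comp_add_sub_axialSector_le [NeZero n] (hs : 1 ≤ s) (hΩ : HomZero Ω)
    (hm : Measurable Ω) {e κ : En n} (he : ‖e‖ = 1) (hκ : 288 * ‖κ‖ ≤ 1) :
    eLpNorm (fun u ↦ Ω (u + κ) - Ω u) s (volume.restrict (axialSector e (1 / 4) (11 / 4))) ≤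
      2 * (1728 ^ n) ^ (1 / s).toReal * radialFactor n 3 s * eModCont s Ω (288 * ‖κ‖) := by
  rcases eq_or_ne κ 0 with rfl | hκ0
  · simp
  have hκ' : 0 < ‖κ‖ := norm_pos_iff.2 hκ0
  set H := ball ((1 / 2 : ℝ) • κ) (‖κ‖ / 2)
  have hball : volume (ball e (3 * ‖κ‖ / (1 / 8))) = 48 ^ n * volume H := by
    have hmul := Measure.addHaar_ball_mul_of_pos volume e (r := 48) (by norm_num) (‖κ‖ / 2)
    rw [finrank_euclideanSpace_fin, ENNReal.ofReal_pow (by norm_num), ENNReal.ofReal_ofNat,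
      ← Measure.addHaar_ball_center volume ((1 / 2 : ℝ) • κ)] at hmul
    rw [← hmul]
    congr 2
    ring
  have hH0 : volume H ≠ 0 := (measure_ball_pos _ _ (by positivity)).ne'
  have hHtop : volume H ≠ ⊤ := measure_ball_lt_top.ne
  have hsub : axialSector e (1 / 4) (11 / 4) ⊆ axialSector e (1 / 8) 3 := fun u hu ↦
    ⟨by linarith [hu.1], by linarith [hu.2]⟩
  have hadd : ∀ u ∈ axialSector e (1 / 4) (11 / 4), u + κ ∈ axialSector e (1 / 8) 3 := by
    rintro u ⟨hu, hu'⟩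
    have hinner : |⟪e, κ⟫| ≤ ‖κ‖ := by simpa [he] using abs_real_inner_le_norm e κ
    refine ⟨?_, by linarith [norm_add_le u κ]⟩
    rw [inner_add_right]
    linarith [neg_abs_le ⟪e, κ⟫]
  refine (ENNReal.mul_le_mul_iff_right (a := volume H ^ (1 / s).toReal)
    (ENNReal.rpow_pos hH0.bot_lt hHtop).ne'
    (ENNReal.rpow_ne_top_of_nonneg ENNReal.toReal_nonneg hHtop)).1 ?_
  calc volume H ^ (1 / s).toReal * eLpNorm (fun u ↦ Ω (u + κ) - Ω u) s
        (volume.restrict (axialSector e (1 / 4) (11 / 4)))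
      ≤ 2 * eLpNorm (fun q : En n × En n ↦ Ω q.2 - Ω q.1) s
          (volume.restrict (nearDiagonal (axialSector e (1 / 8) 3) ‖κ‖)) :=
        measure_ball_rpow_mul_eLpNorm_comp_add_sub_le hs hm.stronglyMeasurable hκ0
          (measurableSet_axialSector e _ _) hsub hadd
    _ ≤ 2 * ((36 ^ n * volume (ball e (3 * ‖κ‖ / (1 / 8)))) ^ (1 / s).toReal *
          (radialFactor n 3 s * eModCont s Ω (12 * (3 * ‖κ‖ / (1 / 8))))) := by
        gcongr
        exact hΩ.eLpNorm_sub_nearDiagonal_le hm he (by norm_num) (by linarith)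
    _ = _ := by
        have hfactor : (36 : ℝ≥0∞) ^ n * (48 ^ n * volume H) = 1728 ^ n * volume H := by
          rw [← mul_assoc, ← mul_pow]
          norm_num
        rw [hball, hfactor, ENNReal.mul_rpow_of_nonneg _ _ ENNReal.toReal_nonneg,
          show 12 * (3 * ‖κ‖ / (1 / 8)) = 288 * ‖κ‖ by ring]
        ring

lemma exists_eLpNorm_comp_add_sub_shell_le_of_norm_le (n : ℕ) [NeZero n] (hs : 1 ≤ s) :
    ∃ C : ℝ≥0, ∀ Ω : En n → ℝ, HomZero Ω → Measurable Ω → ∀ κ : En n, 288 * ‖κ‖ ≤ 1 →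
      eLpNorm (fun u ↦ Ω (u + κ) - Ω u) s (volume.restrict (closedBall 0 (5 / 2) \ ball 0 (1 / 2)))
        ≤ C * eModCont s Ω (288 * ‖κ‖) := by
  obtain ⟨t, ht, hcover⟩ := exists_finset_half_norm_le_inner (En n)
  have hC : t.card * (2 * (1728 ^ n) ^ (1 / s).toReal * radialFactor n 3 s) ≠ ⊤ := by
    have := radialFactor_ne_top (n := n) (R := 3) (s := s)
    finiteness
  lift t.card * (2 * (1728 ^ n) ^ (1 / s).toReal * radialFactor n 3 s) to ℝ≥0 using hC with C hCt
  refine ⟨C, fun Ω hΩ hm κ hκ ↦ ?_⟩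
  have hshell : closedBall (0 : En n) (5 / 2) \ ball 0 (1 / 2) ⊆
      ⋃ e ∈ t, axialSector e (1 / 4) (11 / 4) := by
    rintro u ⟨hu, hu'⟩
    rw [mem_closedBall_zero_iff] at hu
    rw [mem_ball_zero_iff, not_lt] at hu'
    obtain ⟨e, he, heu⟩ := hcover u (norm_pos_iff.1 (by linarith))
    exact mem_iUnion₂.2 ⟨e, he, by linarith, by linarith⟩
  calc eLpNorm (fun u ↦ Ω (u + κ) - Ω u) s
        (volume.restrict (closedBall 0 (5 / 2) \ ball 0 (1 / 2)))
      ≤ eLpNorm (fun u ↦ Ω (u + κ) - Ω u) s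
          (volume.restrict (⋃ e ∈ t, axialSector e (1 / 4) (11 / 4))) :=
        eLpNorm_mono_measure _ (Measure.restrict_mono hshell le_rfl)
    _ ≤ ∑ e ∈ t, eLpNorm (fun u ↦ Ω (u + κ) - Ω u) s
          (volume.restrict (axialSector e (1 / 4) (11 / 4))) :=
        eLpNorm_restrict_biUnion_le hs
          ((hm.comp (measurable_add_const κ)).sub hm).stronglyMeasurable t
          fun e _ ↦ measurableSet_axialSector e _ _
    _ ≤ ∑ _e ∈ t, 2 * (1728 ^ n) ^ (1 / s).toReal * radialFactor n 3 s *
          eModCont s Ω (288 * ‖κ‖) :=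
        Finset.sum_le_sum fun e he ↦ hΩ.eLpNorm_comp_add_sub_axialSector_le hs hm (ht e he) hκ
    _ = C * eModCont s Ω (288 * ‖κ‖) := by
        rw [Finset.sum_const, nsmul_eq_mul, ← mul_assoc, hCt]

lemma exists_eLpNorm_comp_add_sub_annulus_le (n : ℕ) [NeZero n] (hs : 1 ≤ s) :
    ∃ C : ℝ≥0, ∀ Ω : En n → ℝ, HomZero Ω → Measurable Ω → ∀ η : En n, ‖η‖ ≤ 1 / 2 →
      eLpNorm (fun u ↦ Ω (u + η) - Ω u) s (volume.restrict (ball 0 2 \ ball 0 1)) ≤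
        C * eModCont s Ω (‖η‖ / 2) := by
  obtain ⟨C, hC⟩ := exists_eLpNorm_comp_add_sub_shell_le_of_norm_le n hs
  refine ⟨576 * C, fun Ω hΩ hm η hη ↦ ?_⟩
  set κ := (576 : ℝ)⁻¹ • η
  have hκ : ‖κ‖ = ‖η‖ / 576 := by
    rw [norm_smul, Real.norm_of_nonneg (by norm_num), inv_mul_eq_div]
  have hηκ : 576 • κ = η := by
    rw [← Nat.cast_smul_eq_nsmul ℝ, smul_smul]
    norm_num
  have hmaps : ∀ k < 576, ∀ u ∈ ball (0 : En n) 2 \ ball 0 1,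
      u + k • κ ∈ closedBall 0 (5 / 2) \ ball 0 (1 / 2) := by
    intro k hk u hu
    have hk' : ‖k • κ‖ ≤ 1 / 2 := by
      have hk576 : (k : ℝ) ≤ 576 := by exact_mod_cast hk.le
      rw [← Nat.cast_smul_eq_nsmul ℝ, norm_smul, Real.norm_natCast, hκ]
      nlinarith [norm_nonneg η]
    simp only [mem_sdiff, mem_ball_zero_iff, mem_closedBall_zero_iff, not_lt] at hu ⊢
    have := norm_add_le u (k • κ)
    have := norm_sub_le_norm_add u (k • κ)
    constructor <;> linarith [hu.1, hu.2]
  have hstep := hC Ω hΩ hm κ (by rw [hκ]; linarith)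
  have hsum := eLpNorm_comp_add_nsmul_sub_le hs hm.stronglyMeasurable
    (measurableSet_closedBall.diff measurableSet_ball) hstep hmaps
  rw [hηκ, hκ, show 288 * (‖η‖ / 576) = ‖η‖ / 2 by ring] at hsum
  simpa [mul_assoc] using hsum

end SmallTranslation

section Kernel

lemma exists_lipschitzOnWith_rpow_const_Icc {a : ℝ} (ha : 0 < a) (b γ : ℝ) :
    ∃ K : ℝ≥0, LipschitzOnWith K (fun t : ℝ ↦ t ^ γ) (Icc a b) := by
  have hsmooth : ContDiffOn ℝ 1 (fun t : ℝ ↦ t ^ γ) (Icc a b) :=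
    contDiffOn_id.rpow_const_of_ne fun t ht ↦ (ha.trans_le ht.1).ne'
  exact hsmooth.exists_lipschitzOnWith one_ne_zero (convex_Icc a b) isCompact_Icc

lemma exists_rpow_const_le_on_Icc {a : ℝ} (ha : 0 < a) (b γ : ℝ) :
    ∃ M : ℝ≥0, ∀ t ∈ Icc a b, t ^ γ ≤ M := by
  have hcont : ContinuousOn (fun t : ℝ ↦ t ^ γ) (Icc a b) :=
    continuousOn_id.rpow_const fun t ht ↦ Or.inl (ha.trans_le ht.1).ne'
  obtain ⟨M, hM⟩ := isCompact_Icc.exists_bound_of_continuousOn hcont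
  exact ⟨M.toNNReal, fun t ht ↦ (le_abs_self _).trans ((hM t ht).trans (Real.le_coe_toNNReal M))⟩

lemma le_mul_integral_div_rpow_of_monotone {g : ℝ → ℝ} (hg : Monotone g) {β t : ℝ} (hβ : -1 ≤ β)
    (ht : 0 < t) (hgt : 0 ≤ g t) :
    g t ≤ 2 * (2 * t) ^ β * ∫ δ in t..(2 * t), g δ / δ ^ (1 + β) := by
  have hle : t ≤ 2 * t := by linarith
  have hpos : ∀ δ ∈ uIcc t (2 * t), 0 < δ := fun δ hδ ↦ by
    rw [uIcc_of_le hle] at hδ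
    exact ht.trans_le hδ.1
  have hcont : ContinuousOn (fun δ : ℝ ↦ (δ ^ (1 + β))⁻¹) (uIcc t (2 * t)) :=
    (continuousOn_id.rpow_const fun δ hδ ↦ Or.inl (hpos δ hδ).ne').inv₀
      fun δ hδ ↦ (Real.rpow_pos_of_pos (hpos δ hδ) _).ne'
  have hint : IntervalIntegrable (fun δ ↦ g δ / δ ^ (1 + β)) volume t (2 * t) :=
    hg.intervalIntegrable.mul_continuousOn hcont
  have hlower : ∫ _ in t..(2 * t), g t / (2 * t) ^ (1 + β) ≤
      ∫ δ in t..(2 * t), g δ / δ ^ (1 + β) := by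
    refine intervalIntegral.integral_mono_on hle (by simp) hint fun δ hδ ↦ ?_
    have hδ0 : 0 < δ := ht.trans_le hδ.1
    have hgδ : g t ≤ g δ := hg hδ.1
    exact div_le_div₀ (hgt.trans hgδ) hgδ (by positivity)
      (Real.rpow_le_rpow hδ0.le hδ.2 (by linarith))
  calc g t = 2 * (2 * t) ^ β * ∫ _ in t..(2 * t), g t / (2 * t) ^ (1 + β) := by
        rw [intervalIntegral.integral_const, smul_eq_mul, Real.rpow_add (by positivity),
          Real.rpow_one]
        field_simp
        ring
    _ ≤ _ := by gcongr

variable {n : ℕ} {Ω : En n → ℝ} {s : ℝ≥0∞} {γ β R t τ : ℝ}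

lemma rotNorm_nonneg (ρ : En n ≃ₗᵢ[ℝ] En n) : 0 ≤ rotNorm ρ :=
  Real.iSup_nonneg fun _ ↦ norm_nonneg _

lemma eModCont_zero : eModCont s Ω 0 = 0 := by
  have : IsEmpty {ρ : En n ≃ₗᵢ[ℝ] En n // IsRotation ρ ∧ rotNorm ρ < 0} :=
    ⟨fun ρ ↦ (rotNorm_nonneg ρ.1).not_gt ρ.2.2⟩
  exact iSup_of_empty _

lemma HomZero.modCont_le_mul_integral [NeZero n] (hΩ : HomZero Ω) (hm : Measurable Ω) (hs : 1 ≤ s)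
    (hΩs : sphereLpNorm s Ω ≠ ⊤) (hβ : 0 ≤ β) (ht : 0 ≤ t) (htτ : 2 * t ≤ τ) :
    modCont s Ω t ≤ 2 * τ ^ β * ∫ δ in t..(2 * t), modCont s Ω δ / δ ^ (1 + β) := by
  have hnonneg : ∀ δ, 0 ≤ modCont s Ω δ := fun _ ↦ ENNReal.toReal_nonneg
  rcases ht.eq_or_lt with rfl | ht
  · have hzero : modCont s Ω 0 = 0 := congrArg ENNReal.toReal eModCont_zero
    simp [hzero]
  have hle : t ≤ 2 * t := by linarith
  have hint : 0 ≤ ∫ δ in t..(2 * t), modCont s Ω δ / δ ^ (1 + β) :=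
    intervalIntegral.integral_nonneg hle fun δ hδ ↦
      div_nonneg (hnonneg δ) (Real.rpow_nonneg (ht.le.trans hδ.1) _)
  calc modCont s Ω t ≤ 2 * (2 * t) ^ β * ∫ δ in t..(2 * t), modCont s Ω δ / δ ^ (1 + β) :=
        le_mul_integral_div_rpow_of_monotone (hΩ.monotone_modCont hm hs hΩs) (by linarith) ht
          (hnonneg t)
    _ ≤ _ := mul_le_mul_of_nonneg_right (by gcongr) hint

/-- The kernel `Ω(u) |u|^γ`, homogeneous of degree `γ` when `Ω` is homogeneous of degree zero; the
fractional integral kernel is the case `γ = α - n`. -/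
def homKernel (Ω : En n → ℝ) (γ : ℝ) (u : En n) : ℝ := Ω u * ‖u‖ ^ γ

lemma measurable_homKernel (hm : Measurable Ω) (γ : ℝ) : Measurable (homKernel Ω γ) := by
  unfold homKernel
  fun_prop

lemma HomZero.homKernel_eq_rpow_mul (hΩ : HomZero Ω) (hR : 0 < R) (γ : ℝ) (u : En n) :
    homKernel Ω γ u = R ^ γ * homKernel Ω γ (R⁻¹ • u) := by
  have hRγ : R ^ γ ≠ 0 := (Real.rpow_pos_of_pos hR γ).ne'
  rw [homKernel, homKernel, hΩ.apply_smul (inv_pos.2 hR), norm_smul,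
    Real.norm_of_nonneg (by positivity), Real.mul_rpow (by positivity) (norm_nonneg u),
    Real.inv_rpow hR.le]
  field_simp

lemma HomZero.eLpNorm_restrict_ball_ne_top [NeZero n] (hΩ : HomZero Ω) (hm : Measurable Ω)
    (hΩs : sphereLpNorm s Ω ≠ ⊤) (hR : 0 < R) :
    eLpNorm Ω s (volume.restrict (ball 0 R)) ≠ ⊤ := by
  rw [hΩ.eLpNorm_restrict_ball hm hR]
  exact ENNReal.mul_ne_top radialFactor_ne_top hΩs

lemma exists_eLpNorm_mul_rpow_norm_add_sub_annulus_le (hm : Measurable Ω)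
    (hΩ3 : eLpNorm Ω s (volume.restrict (ball 0 3)) ≠ ⊤) (γ : ℝ) :
    ∃ C : ℝ≥0, ∀ η : En n, ‖η‖ ≤ 1 / 2 →
      eLpNorm (fun u ↦ Ω (u + η) * (‖u + η‖ ^ γ - ‖u‖ ^ γ)) s
        (volume.restrict (ball 0 2 \ ball 0 1)) ≤ C * ENNReal.ofReal ‖η‖ := by
  obtain ⟨K, hK⟩ := exists_lipschitzOnWith_rpow_const_Icc (a := 1 / 2) (by norm_num) (5 / 2) γ
  lift eLpNorm Ω s (volume.restrict (ball 0 3)) to ℝ≥0 using hΩ3 with I hI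
  refine ⟨K * I, fun η hη ↦ ?_⟩
  have hpointwise : ∀ u ∈ ball (0 : En n) 2 \ ball 0 1,
      ‖Ω (u + η) * (‖u + η‖ ^ γ - ‖u‖ ^ γ)‖ ≤ K * ‖η‖ * ‖Ω (u + η)‖ := by
    intro u hu
    simp only [mem_sdiff, mem_ball_zero_iff, not_lt] at hu
    have hupper := norm_add_le u η
    have hlower := norm_sub_le_norm_add u η
    rw [norm_mul, mul_comm]
    gcongr
    calc ‖‖u + η‖ ^ γ - ‖u‖ ^ γ‖ ≤ K * ‖‖u + η‖ - ‖u‖‖ :=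
          hK.norm_sub_le ⟨by linarith, by linarith⟩ ⟨by linarith, by linarith⟩
      _ ≤ K * ‖η‖ := by
          gcongr
          simpa using abs_norm_sub_norm_le (u + η) u
  calc eLpNorm (fun u ↦ Ω (u + η) * (‖u + η‖ ^ γ - ‖u‖ ^ γ)) s
        (volume.restrict (ball 0 2 \ ball 0 1))
      ≤ ENNReal.ofReal (K * ‖η‖) *
          eLpNorm (fun u ↦ Ω (u + η)) s (volume.restrict (ball 0 2 \ ball 0 1)) :=
        eLpNorm_le_mul_eLpNorm_of_ae_le_mul
          (ae_restrict_of_forall_mem (measurableSet_ball.diff measurableSet_ball) hpointwise) s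
    _ ≤ ENNReal.ofReal (K * ‖η‖) * I := by
        rw [hI]
        gcongr
        refine eLpNorm_comp_restrict_le_of_mapsTo (measurePreserving_add_right volume η)
          measurableSet_ball (fun u hu ↦ ?_) hm.aestronglyMeasurable
        rw [mem_ball_zero_iff]
        linarith [norm_add_le u η, mem_ball_zero_iff.1 hu.1]
    _ = (K * I : ℝ≥0) * ENNReal.ofReal ‖η‖ := by
        rw [ENNReal.ofReal_mul K.coe_nonneg, ENNReal.ofReal_coe_nnreal]
        push_cast
        ring

lemma HomZero.exists_eLpNorm_comp_add_sub_mul_rpow_norm_annulus_le [NeZero n] (hΩ : HomZero Ω)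
    (hm : Measurable Ω) (hs : 1 ≤ s) (γ : ℝ) :
    ∃ C : ℝ≥0, ∀ η : En n, ‖η‖ ≤ 1 / 2 →
      eLpNorm (fun u ↦ (Ω (u + η) - Ω u) * ‖u‖ ^ γ) s (volume.restrict (ball 0 2 \ ball 0 1)) ≤
        C * eModCont s Ω (‖η‖ / 2) := by
  obtain ⟨M, hM⟩ := exists_rpow_const_le_on_Icc one_pos 2 γ
  obtain ⟨C, hC⟩ := exists_eLpNorm_comp_add_sub_annulus_le n hs
  refine ⟨M * C, fun η hη ↦ ?_⟩
  have hpointwise : ∀ u ∈ ball (0 : En n) 2 \ ball 0 1,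
      ‖(Ω (u + η) - Ω u) * ‖u‖ ^ γ‖ ≤ M * ‖Ω (u + η) - Ω u‖ := by
    intro u hu
    simp only [mem_sdiff, mem_ball_zero_iff, not_lt] at hu
    rw [norm_mul, mul_comm, Real.norm_of_nonneg (by positivity)]
    gcongr
    exact hM _ ⟨hu.2, hu.1.le⟩
  calc eLpNorm (fun u ↦ (Ω (u + η) - Ω u) * ‖u‖ ^ γ) s (volume.restrict (ball 0 2 \ ball 0 1))
      ≤ ENNReal.ofReal M *
          eLpNorm (fun u ↦ Ω (u + η) - Ω u) s (volume.restrict (ball 0 2 \ ball 0 1)) :=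
        eLpNorm_le_mul_eLpNorm_of_ae_le_mul
          (ae_restrict_of_forall_mem (measurableSet_ball.diff measurableSet_ball) hpointwise) s
    _ ≤ M * (C * eModCont s Ω (‖η‖ / 2)) := by
        rw [ENNReal.ofReal_coe_nnreal]
        gcongr
        exact hC Ω hΩ hm η hη
    _ = (M * C : ℝ≥0) * eModCont s Ω (‖η‖ / 2) := by push_cast; ring

lemma HomZero.exists_eLpNorm_homKernel_sub_unit_annulus_le [NeZero n] (hΩ : HomZero Ω)
    (hm : Measurable Ω) (hs : 1 ≤ s) (hΩs : sphereLpNorm s Ω ≠ ⊤) (γ : ℝ) :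
    ∃ C : ℝ≥0, ∀ η : En n, ‖η‖ ≤ 1 / 2 →
      eLpNorm (fun u ↦ homKernel Ω γ (u + η) - homKernel Ω γ u) s
        (volume.restrict (ball 0 2 \ ball 0 1)) ≤
        C * (ENNReal.ofReal ‖η‖ + eModCont s Ω (‖η‖ / 2)) := by
  obtain ⟨A, hA⟩ := exists_eLpNorm_mul_rpow_norm_add_sub_annulus_le hm
    (hΩ.eLpNorm_restrict_ball_ne_top hm hΩs three_pos) γ
  obtain ⟨B, hB⟩ := hΩ.exists_eLpNorm_comp_add_sub_mul_rpow_norm_annulus_le hm hs γ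
  refine ⟨A + B, fun η hη ↦ ?_⟩
  have hsplit : (fun u ↦ homKernel Ω γ (u + η) - homKernel Ω γ u) =
      (fun u ↦ Ω (u + η) * (‖u + η‖ ^ γ - ‖u‖ ^ γ)) + fun u ↦ (Ω (u + η) - Ω u) * ‖u‖ ^ γ := by
    funext u
    simp only [homKernel, Pi.add_apply]
    ring
  have hradial : Measurable fun u ↦ Ω (u + η) * (‖u + η‖ ^ γ - ‖u‖ ^ γ) := by fun_prop
  have hangular : Measurable fun u ↦ (Ω (u + η) - Ω u) * ‖u‖ ^ γ := by fun_prop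
  calc eLpNorm (fun u ↦ homKernel Ω γ (u + η) - homKernel Ω γ u) s
        (volume.restrict (ball 0 2 \ ball 0 1))
      ≤ A * ENNReal.ofReal ‖η‖ + B * eModCont s Ω (‖η‖ / 2) := by
        rw [hsplit]
        exact (eLpNorm_add_le hradial.aestronglyMeasurable hangular.aestronglyMeasurable hs).trans
          (add_le_add (hA η hη) (hB η hη))
    _ ≤ (A + B : ℝ≥0) * (ENNReal.ofReal ‖η‖ + eModCont s Ω (‖η‖ / 2)) := by
        rw [mul_add, ENNReal.coe_add]
        gcongr
        · exact le_self_add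
        · exact le_add_self

lemma measurePreserving_smul_sub {E : Type*} [NormedAddCommGroup E] [NormedSpace ℝ E]
    [FiniteDimensional ℝ E] [MeasurableSpace E] [BorelSpace E] (μ : Measure E)
    [μ.IsAddHaarMeasure] {R : ℝ} (hR : 0 < R) (x₀ : E) :
    MeasurePreserving (fun z ↦ R⁻¹ • (x₀ - z)) μ
      (ENNReal.ofReal (R ^ Module.finrank ℝ E) • μ) := by
  refine MeasurePreserving.comp (g := fun y : E ↦ R⁻¹ • y) ⟨measurable_const_smul _, ?_⟩
    (μ.measurePreserving_sub_left x₀)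
  rw [Measure.map_addHaar_smul μ (inv_ne_zero hR.ne'), inv_pow, inv_inv,
    abs_of_pos (by positivity)]

lemma preimage_smul_sub_ball {E : Type*} [SeminormedAddCommGroup E] [NormedSpace ℝ E] {R : ℝ}
    (hR : 0 < R) (x₀ : E) (r : ℝ) :
    (fun z ↦ R⁻¹ • (x₀ - z)) ⁻¹' ball 0 r = ball x₀ (r * R) := by
  ext z
  rw [mem_preimage, mem_ball_zero_iff, norm_smul, norm_inv, Real.norm_of_nonneg hR.le,
    inv_mul_lt_iff₀ hR, mem_ball_iff_norm', mul_comm R]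

lemma eLpNorm_comp_smul_sub_restrict_annulus {F : En n → ℝ} (hF : Measurable F) (hR : 0 < R)
    (x₀ : En n) :
    eLpNorm (fun z ↦ F (R⁻¹ • (x₀ - z))) s (volume.restrict (ball x₀ (2 * R) \ ball x₀ R)) =
      ENNReal.ofReal (R ^ (n * (s⁻¹).toReal)) *
        eLpNorm F s (volume.restrict (ball 0 2 \ ball 0 1)) := by
  have hmp := (measurePreserving_smul_sub volume hR x₀).restrict_preimage
    (measurableSet_ball.diff (measurableSet_ball (x := 0) (ε := 1)) (s₁ := ball 0 2))
  rw [preimage_sdiff, preimage_smul_sub_ball hR, preimage_smul_sub_ball hR, one_mul,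
    Measure.restrict_smul, finrank_euclideanSpace_fin] at hmp
  have hRn : ENNReal.ofReal (R ^ n) ≠ 0 := (ENNReal.ofReal_pos.2 (by positivity)).ne'
  calc eLpNorm (fun z ↦ F (R⁻¹ • (x₀ - z))) s (volume.restrict (ball x₀ (2 * R) \ ball x₀ R))
      = eLpNorm F s (ENNReal.ofReal (R ^ n) • volume.restrict (ball 0 2 \ ball 0 1)) :=
        eLpNorm_comp_measurePreserving hF.aestronglyMeasurable hmp
    _ = _ := by
        rw [eLpNorm_smul_measure_of_ne_zero hRn, smul_eq_mul, one_div,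
          ENNReal.ofReal_rpow_of_nonneg (by positivity) ENNReal.toReal_nonneg,
          ← Real.rpow_natCast, ← Real.rpow_mul hR.le]

lemma HomZero.eLpNorm_homKernel_sub_annulus (hΩ : HomZero Ω) (hm : Measurable Ω) (hR : 0 < R)
    (x₀ x : En n) :
    eLpNorm (fun z ↦ homKernel Ω γ (x - z) - homKernel Ω γ (x₀ - z)) s
        (volume.restrict (ball x₀ (2 * R) \ ball x₀ R)) =
      ENNReal.ofReal (R ^ (n * (s⁻¹).toReal + γ)) *
        eLpNorm (fun u ↦ homKernel Ω γ (u + R⁻¹ • (x - x₀)) - homKernel Ω γ u) s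
          (volume.restrict (ball 0 2 \ ball 0 1)) := by
  set F : En n → ℝ := fun u ↦ homKernel Ω γ (u + R⁻¹ • (x - x₀)) - homKernel Ω γ u
  have hK := measurable_homKernel hm γ
  have hF : Measurable F := (hK.comp (measurable_add_const _)).sub hK
  have hscale : (fun z ↦ homKernel Ω γ (x - z) - homKernel Ω γ (x₀ - z)) =
      R ^ γ • fun z ↦ F (R⁻¹ • (x₀ - z)) := by
    funext z
    have hz : R⁻¹ • (x₀ - z) + R⁻¹ • (x - x₀) = R⁻¹ • (x - z) := by
      rw [← smul_add]
      congr 1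
      abel
    rw [Pi.smul_apply, smul_eq_mul, mul_sub, hz, ← hΩ.homKernel_eq_rpow_mul hR,
      ← hΩ.homKernel_eq_rpow_mul hR]
  rw [hscale, eLpNorm_const_smul, eLpNorm_comp_smul_sub_restrict_annulus hF hR,
    Real.enorm_of_nonneg (by positivity), ← mul_assoc, ← ENNReal.ofReal_mul (by positivity),
    ← Real.rpow_add hR, add_comm γ]

lemma HomZero.exists_toReal_eLpNorm_homKernel_sub_annulus_le [NeZero n] (hΩ : HomZero Ω)
    (hm : Measurable Ω) (hs : 1 ≤ s) (hΩs : sphereLpNorm s Ω ≠ ⊤) (γ : ℝ) :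
    ∃ C > 0, ∀ (x₀ x : En n) (R : ℝ), 0 < R → ‖x - x₀‖ / R ≤ 1 / 2 →
      (eLpNorm (fun z ↦ homKernel Ω γ (x - z) - homKernel Ω γ (x₀ - z)) s
        (volume.restrict (ball x₀ (2 * R) \ ball x₀ R))).toReal ≤
      C * R ^ (n * (s⁻¹).toReal + γ) * (‖x - x₀‖ / R + modCont s Ω (‖x - x₀‖ / (2 * R))) := by
  obtain ⟨C, hC⟩ := hΩ.exists_eLpNorm_homKernel_sub_unit_annulus_le hm hs hΩs γ
  refine ⟨C + 1, by positivity, fun x₀ x R hR hxR ↦ ?_⟩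
  have hη : ‖R⁻¹ • (x - x₀)‖ = ‖x - x₀‖ / R := by
    rw [norm_smul, norm_inv, Real.norm_of_nonneg hR.le, inv_mul_eq_div]
  have hmod : eModCont s Ω (‖x - x₀‖ / (2 * R)) ≠ ⊤ := hΩ.eModCont_ne_top hm hs hΩs
  have hunit := ENNReal.toReal_mono (by rw [hη, div_div, mul_comm R]; finiteness)
    (hC (R⁻¹ • (x - x₀)) (hη.trans_le hxR))
  rw [hη, div_div, mul_comm R, ENNReal.toReal_mul, ENNReal.toReal_add ENNReal.ofReal_ne_top hmod,
    ENNReal.toReal_ofReal (by positivity), ENNReal.coe_toReal] at hunit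
  have hmod0 : 0 ≤ modCont s Ω (‖x - x₀‖ / (2 * R)) := ENNReal.toReal_nonneg
  rw [hΩ.eLpNorm_homKernel_sub_annulus hm hR, ENNReal.toReal_mul,
    ENNReal.toReal_ofReal (by positivity), mul_comm ((C : ℝ) + 1), mul_assoc]
  gcongr
  refine hunit.trans ?_
  change (C : ℝ) * (‖x - x₀‖ / R + modCont s Ω (‖x - x₀‖ / (2 * R))) ≤ _
  gcongr
  linarith

end Kernel

theorem kernel_difference_dyadic_center_general {n : ℕ} [NeZero n] (α : ℝ)
    {s : ℝ≥0∞} (hs : 1 ≤ s) {β : ℝ} (hβ : 0 ≤ β) {Ω : En n → ℝ} (hm : Measurable Ω)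
    (hΩ : HomZero Ω) (hΩs : sphereLpNorm s Ω ≠ ⊤) :
    ∃ C > 0, ∀ (x₀ : En n) (r : ℝ), 0 < r → ∀ j : ℕ, 1 ≤ j → ∀ x ∈ ball x₀ r,
      (eLpNorm (fun z : En n ↦
          Ω (x - z) * ‖x - z‖ ^ (α - (n : ℝ)) - Ω (x₀ - z) * ‖x₀ - z‖ ^ (α - (n : ℝ))) s
        (volume.restrict
          (ball x₀ ((2 : ℝ) ^ (j + 1) * r) \ ball x₀ ((2 : ℝ) ^ j * r)))).toReal ≤
      C * ((2 : ℝ) ^ j * r) ^ ((n : ℝ) * (s⁻¹).toReal - ((n : ℝ) - α)) *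
        (1 / (2 : ℝ) ^ j + (1 / (2 : ℝ) ^ ((j : ℝ) * β)) *
          (∫ δ in (‖x - x₀‖ / ((2 : ℝ) ^ (j + 1) * r))..(‖x - x₀‖ / ((2 : ℝ) ^ j * r)),
            modCont s Ω δ / δ ^ (1 + β))) := by
  obtain ⟨C, hC0, hC⟩ := hΩ.exists_toReal_eLpNorm_homKernel_sub_annulus_le hm hs hΩs (α - n)
  refine ⟨2 * C, by positivity, fun x₀ r hr j hj x hx ↦ ?_⟩
  set R : ℝ := 2 ^ j * r with hR
  have hR0 : 0 < R := by positivity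
  have hdouble : (2 : ℝ) ^ (j + 1) * r = 2 * R := by rw [hR]; ring
  have hxR : ‖x - x₀‖ / R ≤ 1 / 2 ^ j := by
    rw [← mul_div_mul_left 1 _ hr.ne', mul_one, mul_comm r, ← hR]
    gcongr
    exact (mem_ball_iff_norm.1 hx).le
  have hj2 : 1 / (2 : ℝ) ^ j ≤ 1 / 2 :=
    one_div_le_one_div_of_le two_pos (le_self_pow₀ one_le_two (by omega))
  have htwo : 2 * (‖x - x₀‖ / (2 * R)) = ‖x - x₀‖ / R := by field_simp
  have hmod := hΩ.modCont_le_mul_integral hm hs hΩs hβ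
    (t := ‖x - x₀‖ / (2 * R)) (by positivity) (htwo.trans_le hxR)
  rw [htwo, Real.div_rpow zero_le_one (by positivity), Real.one_rpow, ← Real.rpow_natCast,
    ← Real.rpow_mul two_pos.le, mul_assoc] at hmod
  rw [hdouble]
  set J := ∫ δ in (‖x - x₀‖ / (2 * R))..(‖x - x₀‖ / R), modCont s Ω δ / δ ^ (1 + β)
  calc _ ≤ C * R ^ (n * (s⁻¹).toReal + (α - n)) *
          (‖x - x₀‖ / R + modCont s Ω (‖x - x₀‖ / (2 * R))) := hC x₀ x R hR0 (hxR.trans hj2)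
    _ ≤ C * R ^ (n * (s⁻¹).toReal + (α - n)) *
          (2 * (1 / 2 ^ j) + 2 * (1 / 2 ^ (j * β) * J)) := by
        gcongr
        exact hxR.trans (le_mul_of_one_le_left (by positivity) one_le_two)
    _ = 2 * C * R ^ (n * (s⁻¹).toReal - (n - α)) * (1 / 2 ^ j + 1 / 2 ^ (j * β) * J) := by
        rw [sub_sub_eq_add_sub, add_sub_assoc]
        ring

/-- (Kernel smoothness estimate on dyadic annuli, one-point version.) -/
theorem kernel_difference_dyadic_center {n : ℕ} (hn : 2 ≤ n)
    (α : ℝ) (hα0 : 0 < α) (hαn : α < n)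
    (s : ℝ≥0∞) (hs1 : 1 < s)
    (β : ℝ) (hβ0 : 0 < β) (hβ1 : β ≤ 1)
    (Ω : En n → ℝ) (hΩm : Measurable Ω) (hD : DiniCond s β Ω) :
    ∃ C > 0, ∀ (x₀ : En n) (r : ℝ), 0 < r → ∀ j : ℕ, 2 ≤ j →
      ∀ x ∈ ball x₀ r,
        (eLpNorm
            (fun z : En n =>
              Ω (x - z) * ‖x - z‖ ^ (α - (n : ℝ)) - Ω (x₀ - z) * ‖x₀ - z‖ ^ (α - (n : ℝ))) s
            (volume.restrict
              (ball x₀ ((2 : ℝ) ^ (j + 1) * r) \ ball x₀ ((2 : ℝ) ^ j * r)))).toReal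
        ≤ C * ((2 : ℝ) ^ j * r) ^ ((n : ℝ) * (s⁻¹).toReal - ((n : ℝ) - α)) *
            (1 / (2 : ℝ) ^ j +
              (1 / (2 : ℝ) ^ ((j : ℝ) * β)) *
                (∫ δ in (‖x - x₀‖ / ((2 : ℝ) ^ (j + 1) * r))..(‖x - x₀‖ / ((2 : ℝ) ^ j * r)),
                  modCont s Ω δ / δ ^ (1 + β))) := by
  have : NeZero n := ⟨by omega⟩
  obtain ⟨C, hC0, hC⟩ :=
    kernel_difference_dyadic_center_general α hs1.le hβ0.le hΩm hD.1 hD.2.1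
  exact ⟨C, hC0, fun x₀ r hr j hj ↦ hC x₀ r hr j (one_le_two.trans hj)⟩
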